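/- arXiv:2211.14678 — 6 statements merged into one kernel-verified Lean document; each statement's English description precedes it below -/
import Mathlib

section
/- For every integer k ≥ 1, h(k) ≤ (3/2)·k + 4, where h(k) is the diameter of the graph G_k on the permutations of [k] whose edges are prefix and suffix reversals. -/
/-- `π` and `τ` are related by a prefix reversal: there is `t ≤ k` such that the first `t`
entries are reversed and the remaining entries agree (0-indexed form of the paper's
1-indexed definition). -/
def PrefixRev (k : ℕ) (π τ : Equiv.Perm (Fin k)) : Prop :=
  ∃ t : ℕ, ∃ ht : t ≤ k,
    (∀ i : Fin k, t ≤ (i : ℕ) → π i = τ i) ∧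
    (∀ i : Fin k, ∀ hi : (i : ℕ) < t, π i = τ ⟨t - 1 - (i : ℕ), by omega⟩)

/-- `π` and `τ` are related by a suffix reversal: there is `t` such that the entries at
positions `< t` agree and the remaining entries are reversed. -/
def SuffixRev (k : ℕ) (π τ : Equiv.Perm (Fin k)) : Prop :=
  ∃ t : ℕ,
    (∀ i : Fin k, (i : ℕ) < t → π i = τ i) ∧
    (∀ i : Fin k, ∀ hi : t ≤ (i : ℕ), π i = τ ⟨k - 1 - (i : ℕ) + t, by
      have := i.isLt; omega⟩)

/-- The pancake graph `P_k`, whose edges are prefix reversals. -/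
def pancakeGraph (k : ℕ) : SimpleGraph (Equiv.Perm (Fin k)) :=
  SimpleGraph.fromRel (PrefixRev k)

/-- The graph `G_k`, whose edges are prefix and suffix reversals. -/
def prefixSuffixGraph (k : ℕ) : SimpleGraph (Equiv.Perm (Fin k)) :=
  SimpleGraph.fromRel (fun π τ => PrefixRev k π τ ∨ SuffixRev k π τ)

/-- The values of `π` at positions `p` and `q` differ by `1`, or are `{1, k}`
(1-indexed), i.e. `{0, k - 1}` in this 0-indexed formalization. -/
def PiAdjacency (k : ℕ) (π : Equiv.Perm (Fin k)) (p q : Fin k) : Prop :=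
  (((π p : ℕ) : ℤ) - ((π q : ℕ) : ℤ)).natAbs = 1 ∨
    ({(π p : ℕ), (π q : ℕ)} : Set ℕ) = {0, k - 1}

/-- Positions `i` and `i + 1` (0-indexed) form a `π`-adjacency. -/
def PosAdjacency (k : ℕ) (π : Equiv.Perm (Fin k)) (i : ℕ) : Prop :=
  ∃ h : i + 1 < k, PiAdjacency k π ⟨i, by omega⟩ ⟨i + 1, h⟩

/-- The equivalence relation `∼_π`: `a ∼_π b` iff every pair of consecutive positions
between the position of `a` and the position of `b` is a `π`-adjacency. -/
def Sim (k : ℕ) (π : Equiv.Perm (Fin k)) (a b : Fin k) : Prop :=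
  ∀ i : ℕ, min ((π.symm a : ℕ)) ((π.symm b : ℕ)) ≤ i →
    i < max ((π.symm a : ℕ)) ((π.symm b : ℕ)) → PosAdjacency k π i

/-- `∼_π` has exactly one equivalence class on `[k]`. -/
def OneClass (k : ℕ) (π : Equiv.Perm (Fin k)) : Prop :=
  ∀ a b : Fin k, Sim k π a b

/-- The pairing `φ(j) = j + o_j`, swapping `2i - 1 ↔ 2i` (1-indexed),
i.e. `2i ↔ 2i + 1` (0-indexed). -/
def partner (d : ℕ) (j : Fin (2 * d)) : Fin (2 * d) :=
  ⟨if (j : ℕ) % 2 = 0 then (j : ℕ) + 1 else (j : ℕ) - 1, by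
    have := j.isLt; split <;> omega⟩

/-- The equivalence relation `≈_π`. -/
def ApproxSim (d : ℕ) (π : Equiv.Perm (Fin (2 * d))) (a b : Fin (2 * d)) : Prop :=
  a = b ∨ (Sim (2 * d) π a b ∧ Sim (2 * d) π a (partner d a) ∧
    Sim (2 * d) π b (partner d b))

/-- `j` is free, i.e. `{j}` is an equivalence class (a singleton) of `≈_π`. -/
def IsFree (d : ℕ) (π : Equiv.Perm (Fin (2 * d))) (j : Fin (2 * d)) : Prop :=
  ∀ j' : Fin (2 * d), ApproxSim d π j j' → j' = j

/-- The `≈_π`-equivalence class of `j`, as a finite set. -/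
noncomputable def classOf (d : ℕ) (π : Equiv.Perm (Fin (2 * d))) (j : Fin (2 * d)) :
    Finset (Fin (2 * d)) :=
  @Finset.filter _ (fun j' => ApproxSim d π j j') (Classical.decPred _) Finset.univ

/-- `S(π)`, the number of singletons of `π`. -/
noncomputable def numSingletons (d : ℕ) (π : Equiv.Perm (Fin (2 * d))) : ℕ :=
  (@Finset.filter _ (fun j => IsFree d π j) (Classical.decPred _) Finset.univ).card

/-- `B(π)`, the number of blocks (equivalence classes of `≈_π` of size `> 1`) of `π`. -/
noncomputable def numBlocks (d : ℕ) (π : Equiv.Perm (Fin (2 * d))) : ℕ :=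
  ((Finset.univ.image (classOf d π)).filter (fun C => 1 < C.card)).card

/-- The potential function `ν(π) = (3/2) S(π) + 2 B(π)`. -/
noncomputable def nu (d : ℕ) (π : Equiv.Perm (Fin (2 * d))) : ℚ :=
  3 / 2 * (numSingletons d π : ℚ) + 2 * (numBlocks d π : ℚ)

/-- The unique element of `[k]` congruent to `j - o_j` modulo `k` (0-indexed form). -/
def prevVal (d : ℕ) (j : Fin (2 * d)) : Fin (2 * d) :=
  ⟨if (j : ℕ) % 2 = 0 then ((j : ℕ) + 2 * d - 1) % (2 * d) else ((j : ℕ) + 1) % (2 * d), by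
    have := j.isLt; split <;> exact Nat.mod_lt _ (by omega)⟩

namespace PSR

def Step {α : Type} (l m : List α) : Prop :=
  ∃ u v : List α, l = u ++ v ∧ (m = u.reverse ++ v ∨ m = u ++ v.reverse)

inductive Reach {α : Type} : ℕ → List α → List α → Prop
  | refl (l : List α) : Reach 0 l l
  | tail {n : ℕ} {a b c : List α} : Reach n a b → Step b c → Reach (n + 1) a c

theorem Reach.trans {α : Type} {n m : ℕ} {a b c : List α} (h : Reach n a b)
    (h2 : Reach m b c) : Reach (n + m) a c := by
  induction h2 with
  | refl => exact h
  | tail _ s ih => exact Reach.tail (ih h) s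

theorem pre {α : Type} {l m : List α} (u v : List α) (h : l = u ++ v)
    (h2 : m = u.reverse ++ v) : Reach 1 l m :=
  Reach.tail (Reach.refl l) ⟨u, v, h, Or.inl h2⟩

theorem suf {α : Type} {l m : List α} (u v : List α) (h : l = u ++ v)
    (h2 : m = u ++ v.reverse) : Reach 1 l m :=
  Reach.tail (Reach.refl l) ⟨u, v, h, Or.inr h2⟩

inductive Grp (α : Type)
  | joined (l : List α) : Grp α
  | split (x y : α) : Grp α

def tau {α : Type} (l : List α) : Sym2 (List α) := s(l, l.reverse)

theorem tau_rev {α : Type} (l : List α) : tau l.reverse = tau l := by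
  simp [tau, Sym2.eq_swap]

theorem tau_eq {α : Type} {l m : List α} (h : tau l = tau m) : l = m ∨ l = m.reverse := by
  simp only [tau, Sym2.eq_iff] at h
  tauto

def Grp.exp {α : Type} : Grp α → List α
  | .joined l => l
  | .split x y => [x, y]

def Grp.it {α : Type} : Grp α → Multiset (Sym2 (List α))
  | .joined l => {tau l}
  | .split x y => {tau [x], tau [y]}

def Grp.rev {α : Type} : Grp α → Grp α
  | .joined l => .joined l.reverse
  | .split x y => .split y x

def Grp.w {α : Type} : Grp α → ℕ
  | .joined _ => 2
  | .split _ _ => 3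

def flat {α : Type} (G : List (Grp α)) : List α := (G.map Grp.exp).flatten
def items {α : Type} (G : List (Grp α)) : Multiset (Sym2 (List α)) := (G.map Grp.it).sum
def nuG {α : Type} (G : List (Grp α)) : ℕ := (G.map Grp.w).sum

def T {α : Type} (G : List (Grp α)) (t : List α) : Prop :=
  t ~r flat G ∨ t.reverse ~r flat G

def mW {α : Type} (W : List (List α)) : Multiset (Sym2 (List α)) := (W.map tau : List _)

def rv {α : Type} (W : List (List α)) : List (List α) := (W.map List.reverse).reverse

@[simp] theorem flatten_rv {α : Type} (W : List (List α)) :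
    (rv W).flatten = W.flatten.reverse := by
  simp [rv, List.reverse_flatten]

@[simp] theorem mW_append {α : Type} (W V : List (List α)) : mW (W ++ V) = mW W + mW V := by
  simp [mW]

@[simp] theorem mW_cons {α : Type} (l : List α) (V : List (List α)) :
    mW (l :: V) = {tau l} + mW V := by
  simp [mW]

@[simp] theorem mW_nil {α : Type} : mW ([] : List (List α)) = 0 := by
  simp [mW]

@[simp] theorem mW_rv {α : Type} (W : List (List α)) : mW (rv W) = mW W := by
  induction W with
  | nil => rfl
  | cons a W ih =>
    have : rv (a :: W) = rv W ++ [a.reverse] := by simp [rv]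
    rw [this]; simp [ih, tau_rev, add_comm]

/-- `G'` refines to the same problem as `G`. -/
def Eqv {α : Type} (G G' : List (Grp α)) : Prop :=
  (∀ t, T G' t → T G t) ∧ items G = items G' ∧ nuG G = nuG G'

theorem Eqv.trans {α : Type} {G H K : List (Grp α)} (h : Eqv G H) (h2 : Eqv H K) : Eqv G K :=
  ⟨fun t ht => h.1 t (h2.1 t ht), h.2.1.trans h2.2.1, h.2.2.trans h2.2.2⟩

theorem eqv_rot {α : Type} (G H : List (Grp α)) : Eqv (G ++ H) (H ++ G) := by
  refine ⟨?_, ?_, ?_⟩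
  · intro t ht
    have : flat (H ++ G) ~r flat (G ++ H) := by
      simp only [flat, List.map_append, List.flatten_append]
      exact List.isRotated_append
    rcases ht with h | h
    · exact Or.inl (h.trans this)
    · exact Or.inr (h.trans this)
  · simp [items, add_comm]
  · simp [nuG, add_comm]

theorem exp_rev {α : Type} (g : Grp α) : g.rev.exp = g.exp.reverse := by
  cases g <;> simp [Grp.rev, Grp.exp]

theorem it_rev {α : Type} (g : Grp α) : g.rev.it = g.it := by
  cases g with
  | joined l => simp [Grp.rev, Grp.it, tau_rev]
  | split x y => exact Multiset.pair_comm _ _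

theorem w_rev {α : Type} (g : Grp α) : g.rev.w = g.w := by
  cases g <;> simp [Grp.rev, Grp.w]

theorem flat_rev {α : Type} (G : List (Grp α)) :
    flat (G.map Grp.rev).reverse = (flat G).reverse := by
  simp [flat, List.reverse_flatten, Function.comp_def, exp_rev]

theorem eqv_rev {α : Type} (G : List (Grp α)) : Eqv G (G.map Grp.rev).reverse := by
  refine ⟨?_, ?_, ?_⟩
  · intro t ht
    unfold T at *
    rw [flat_rev] at ht
    rcases ht with h | h
    · right; simpa using h.reverse
    · left; simpa using h.reverse
  · simp [items, Function.comp_def, it_rev]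
  · simp [nuG, Function.comp_def, w_rev]

theorem mem_items {α : Type} {G : List (Grp α)} {x : Sym2 (List α)} (h : x ∈ items G) :
    ∃ g ∈ G, x ∈ g.it := by
  induction G with
  | nil => simp [items] at h
  | cons g G ih =>
    simp only [items, List.map_cons, List.sum_cons, Multiset.mem_add] at h
    rcases h with h | h
    · exact ⟨g, by simp, h⟩
    · obtain ⟨g', h1, h2⟩ := ih h
      exact ⟨g', by simp [h1], h2⟩

theorem eqv_front {α : Type} {G : List (Grp α)} {g : Grp α} (h : g ∈ G) :
    ∃ G', Eqv G (g :: G') := by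
  obtain ⟨s, t, rfl⟩ := List.append_of_mem h
  exact ⟨t ++ s, eqv_rot s (g :: t)⟩

theorem eqv_front_rev {α : Type} {G : List (Grp α)} {g : Grp α} (h : g ∈ G) :
    ∃ G', Eqv G (g.rev :: G') := by
  obtain ⟨G', h'⟩ := eqv_front (G := (G.map Grp.rev).reverse) (g := g.rev)
    (by simp only [List.mem_reverse, List.mem_map]; exact ⟨g, h, rfl⟩)
  exact ⟨G', (eqv_rev G).trans h'⟩

theorem normalize {α : Type} {G : List (Grp α)} {A : List α} (h : tau A ∈ items G) :
    ∃ G', Eqv G (Grp.joined A.reverse :: G') ∨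
      ∃ x y, A = [x] ∧ Eqv G (Grp.split x y :: G') := by
  obtain ⟨g, hg, hx⟩ := mem_items h
  obtain ⟨G1, h1⟩ := eqv_front hg
  obtain ⟨G2, h2⟩ := eqv_front_rev hg
  cases g with
  | joined l =>
    simp only [Grp.it, Multiset.mem_singleton] at hx
    rcases tau_eq hx with rfl | rfl
    · exact ⟨G2, Or.inl h2⟩
    · exact ⟨G1, Or.inl (by simpa using h1)⟩
  | split x y =>
    simp only [Grp.it, Multiset.insert_eq_cons, Multiset.mem_cons, Multiset.mem_singleton] at hx
    rcases hx with hx | hx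
    · exact ⟨G1, Or.inr ⟨x, y, by simpa using tau_eq hx, h1⟩⟩
    · exact ⟨G2, Or.inr ⟨y, x, by simpa using tau_eq hx, h2⟩⟩

theorem mem_mW {α : Type} {W : List (List α)} {x : Sym2 (List α)} (h : x ∈ mW W) :
    ∃ P l Q, W = P ++ l :: Q ∧ tau l = x := by
  simp only [mW, Multiset.mem_coe, List.mem_map] at h
  obtain ⟨l, hl, rfl⟩ := h
  obtain ⟨P, Q, rfl⟩ := List.append_of_mem hl
  exact ⟨P, l, Q, rfl, rfl⟩

theorem mem_mW_single {α : Type} {W : List (List α)} {x : α} (h : tau [x] ∈ mW W) :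
    ∃ P Q, W = P ++ [x] :: Q := by
  obtain ⟨P, l, Q, rfl, h2⟩ := mem_mW h
  have : l = [x] := by simpa using tau_eq h2
  subst this
  exact ⟨P, Q, rfl⟩

@[simp] theorem items_cons {α : Type} (g : Grp α) (G : List (Grp α)) :
    items (g :: G) = g.it + items G := by simp [items]

@[simp] theorem nuG_cons {α : Type} (g : Grp α) (G : List (Grp α)) :
    nuG (g :: G) = g.w + nuG G := by simp [nuG]

@[simp] theorem flat_cons {α : Type} (g : Grp α) (G : List (Grp α)) :
    flat (g :: G) = g.exp ++ flat G := by simp [flat]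

def Good {α : Type} (G : List (Grp α)) (W : List (List α)) : Prop :=
  ∃ t n, n + 2 ≤ nuG G ∧ Reach n W.flatten t ∧ T G t

theorem Good.step {α : Type} {G G' : List (Grp α)} {W W' : List (List α)} {n : ℕ}
    (h : Good G' W') (hn : nuG G' + n ≤ nuG G) (hf : flat G' = flat G)
    (hr : Reach n W.flatten W'.flatten) : Good G W := by
  obtain ⟨t, m, h1, h2, h3⟩ := h
  refine ⟨t, n + m, by omega, hr.trans h2, ?_⟩
  unfold T at *
  rwa [← hf]

theorem Good.eqv {α : Type} {G G' : List (Grp α)} {W : List (List α)}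
    (h : Good G' W) (e : Eqv G G') : Good G W := by
  obtain ⟨t, m, h1, h2, h3⟩ := h
  exact ⟨t, m, by rw [e.2.2]; exact h1, h2, e.1 t h3⟩

theorem reachA {α : Type} (a p b q c z : List α) :
    Reach 3 (a ++ (p ++ (b ++ (q ++ (c ++ z)))))
      (p.reverse ++ (a.reverse ++ (b ++ (c.reverse.reverse ++ (z ++ q.reverse))))) := by
  have h1 : Reach 1 (a ++ (p ++ (b ++ (q ++ (c ++ z)))))
      (p.reverse ++ (a.reverse ++ (b ++ (q ++ (c ++ z))))) :=
    pre (a ++ p) (b ++ (q ++ (c ++ z))) (by simp) (by simp)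
  have h2 : Reach 1 (p.reverse ++ (a.reverse ++ (b ++ (q ++ (c ++ z)))))
      (p.reverse ++ (a.reverse ++ (b ++ (q ++ (z.reverse ++ c.reverse))))) :=
    suf (p.reverse ++ (a.reverse ++ (b ++ q))) (c ++ z) (by simp) (by simp)
  have h3 : Reach 1 (p.reverse ++ (a.reverse ++ (b ++ (q ++ (z.reverse ++ c.reverse)))))
      (p.reverse ++ (a.reverse ++ (b ++ (c.reverse.reverse ++ (z ++ q.reverse))))) :=
    suf (p.reverse ++ (a.reverse ++ b)) (q ++ (z.reverse ++ c.reverse)) (by simp) (by simp)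
  exact (h1.trans h2).trans h3

theorem reachB {α : Type} (a p : List α) (c : α) (q : List α) (b : α) (z : List α) :
    Reach 3 (a ++ (p ++ ([c] ++ (q ++ ([b] ++ z)))))
      (z ++ (p.reverse ++ (a.reverse ++ ([b] ++ ([c] ++ q))))) := by
  have h1 : Reach 1 (a ++ (p ++ ([c] ++ (q ++ ([b] ++ z)))))
      (a ++ (p ++ (z.reverse ++ ([b] ++ (q.reverse ++ [c]))))) :=
    suf (a ++ p) ([c] ++ (q ++ ([b] ++ z))) (by simp) (by simp)
  have h2 : Reach 1 (a ++ (p ++ (z.reverse ++ ([b] ++ (q.reverse ++ [c])))))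
      (a ++ (p ++ (z.reverse ++ ([b] ++ ([c] ++ q))))) :=
    suf (a ++ (p ++ (z.reverse ++ [b]))) (q.reverse ++ [c]) (by simp) (by simp)
  have h3 : Reach 1 (a ++ (p ++ (z.reverse ++ ([b] ++ ([c] ++ q)))))
      (z ++ (p.reverse ++ (a.reverse ++ ([b] ++ ([c] ++ q))))) :=
    pre (a ++ (p ++ z.reverse)) ([b] ++ ([c] ++ q)) (by simp) (by simp)
  exact (h1.trans h2).trans h3

theorem items_eq_zero {α : Type} {G : List (Grp α)} (h : items G = 0) : G = [] := by
  cases G with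
  | nil => rfl
  | cons g G => cases g <;> simp [Grp.it] at h

theorem main {α : Type} (N : ℕ) : ∀ (G : List (Grp α)) (W : List (List α)),
    nuG G ≤ N → G ≠ [] → mW W = items G → Good G W := by
  induction N using Nat.strong_induction_on with
  | _ N ih =>
  intro G W hN hG hW
  have IH : ∀ (G' : List (Grp α)) (W' : List (List α)), nuG G' < nuG G → G' ≠ [] →
      mW W' = items G' → Good G' W' := fun G' W' h h1 h2 =>
    ih (nuG G') (by omega) G' W' le_rfl h1 h2
  clear ih hN
  cases W with
  | nil => exact absurd (items_eq_zero (by simpa using hW.symm)) hG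
  | cons A W =>
  have hA : tau A ∈ items G := by rw [← hW]; simp
  obtain ⟨G', h | ⟨x, y, rfl, h⟩⟩ := normalize hA
  · refine Good.eqv ?_ h
    rw [h.2.1] at hW
    rw [h.2.2] at IH
    clear h hA hG
    simp only [mW_cons, items_cons, Grp.it, tau_rev, add_right_inj] at hW
    cases G' with
    | nil =>
      have : W = [] := by
        cases W with
        | nil => rfl
        | cons => simp [items] at hW
      subst this
      refine ⟨A, 0, by simp [Grp.w], by simpa using Reach.refl A, ?_⟩
      right
      have e : flat [Grp.joined A.reverse] = A.reverse := by simp [flat, Grp.exp]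
      rw [e]
    | cons g G =>
    cases g with
    | joined B =>
      have hB : tau B ∈ mW W := by rw [hW]; simp [Grp.it]
      obtain ⟨P, l, Q, rfl, hl⟩ := mem_mW hB
      simp only [mW_append, mW_cons, items_cons, Grp.it, hl] at hW
      rw [add_left_comm, add_right_inj] at hW
      rcases tau_eq hl with rfl | rfl
      · refine Good.step (n := 1) (G' := Grp.joined (A.reverse ++ l) :: G)
          (W' := rv P ++ (A.reverse ++ l) :: Q) (IH _ _ ?_ ?_ ?_) ?_ ?_ ?_
        · simp [Grp.w]
        · simp
        · simp only [mW_append, mW_cons, mW_nil, mW_rv, items_cons, Grp.it, ← hW]; abel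
        · simp only [nuG_cons, Grp.w]; omega
        · simp [Grp.exp]
        · exact pre (A ++ P.flatten) (l ++ Q.flatten) (by simp) (by simp)
      · refine Good.step (n := 2) (G' := Grp.joined (A.reverse ++ B) :: G)
          (W' := Q ++ (rv P ++ [A.reverse ++ B])) (IH _ _ ?_ ?_ ?_) ?_ ?_ ?_
        · simp [Grp.w]
        · simp
        · simp only [mW_append, mW_cons, mW_nil, mW_rv, items_cons, Grp.it, ← hW]; abel
        · simp only [nuG_cons, Grp.w]; omega
        · simp [Grp.exp]
        · refine Reach.trans (n := 1) (m := 1)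
            (b := A ++ (P.flatten ++ (Q.flatten.reverse ++ B))) ?_ ?_
          · exact suf (A ++ P.flatten) (B.reverse ++ Q.flatten) (by simp) (by simp)
          · exact pre (A ++ (P.flatten ++ Q.flatten.reverse)) B (by simp) (by simp)
    | split b c =>
      have hB : tau [b] ∈ mW W := by rw [hW]; simp [Grp.it]
      obtain ⟨P, Q, rfl⟩ := mem_mW_single hB
      simp only [mW_append, mW_cons, items_cons, Grp.it, Multiset.insert_eq_cons,
        ← Multiset.singleton_add] at hW
      rw [add_left_comm, add_assoc, add_right_inj] at hW
      have hC : tau [c] ∈ mW P + mW Q := by rw [hW]; simp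
      rcases Multiset.mem_add.1 hC with hC | hC
      · obtain ⟨P, R, rfl⟩ := mem_mW_single hC
        simp only [mW_append, mW_cons] at hW
        rw [add_left_comm, add_assoc, add_right_inj] at hW
        refine Good.step (n := 3) (G' := Grp.joined (A.reverse ++ [b, c]) :: G)
          (W' := Q ++ (rv P ++ (A.reverse ++ [b, c]) :: R)) (IH _ _ ?_ ?_ ?_) ?_ ?_ ?_
        · simp [Grp.w]
        · simp
        · simp only [mW_append, mW_cons, mW_nil, mW_rv, items_cons, Grp.it, ← hW]; abel
        · simp only [nuG_cons, Grp.w]; omega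
        · simp [Grp.exp]
        · simpa using reachB A P.flatten c R.flatten b Q.flatten
      · obtain ⟨R, Q, rfl⟩ := mem_mW_single hC
        simp only [mW_append, mW_cons] at hW
        rw [add_left_comm (mW R), add_left_comm, add_right_inj] at hW
        refine Good.step (n := 3) (G' := Grp.joined (A.reverse ++ [b, c]) :: G)
          (W' := rv P ++ (A.reverse ++ [b, c]) :: (Q ++ rv R)) (IH _ _ ?_ ?_ ?_) ?_ ?_ ?_
        · simp [Grp.w]
        · simp
        · simp only [mW_append, mW_cons, mW_nil, mW_rv, items_cons, Grp.it, ← hW]; abel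
        · simp only [nuG_cons, Grp.w]; omega
        · simp [Grp.exp]
        · simpa using reachA A P.flatten [b] R.flatten [c] Q.flatten
  · refine Good.eqv ?_ h
    rw [h.2.1] at hW
    rw [h.2.2] at IH
    clear h hA hG
    simp only [mW_cons, items_cons, Grp.it, Multiset.insert_eq_cons,
        ← Multiset.singleton_add] at hW
    rw [add_assoc, add_right_inj] at hW
    have hC : tau [y] ∈ mW W := by rw [hW]; simp
    obtain ⟨P, Q, rfl⟩ := mem_mW_single hC
    simp only [mW_append, mW_cons] at hW
    rw [add_left_comm, add_right_inj] at hW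
    refine Good.step (n := 1) (G' := Grp.joined [x, y] :: G')
          (W' := rv P ++ [x, y] :: Q) (IH _ _ ?_ ?_ ?_) ?_ ?_ ?_
    · simp [Grp.w]
    · simp
    · simp only [mW_append, mW_cons, mW_nil, mW_rv, items_cons, Grp.it, ← hW]; abel
    · simp only [nuG_cons, Grp.w]; omega
    · simp [Grp.exp]
    · exact pre ([x] ++ P.flatten) ([y] ++ Q.flatten) (by simp) (by simp)

def chunk {α : Type} : List α → List (Grp α)
  | [] => []
  | [x] => [Grp.joined [x]]
  | x :: y :: l => Grp.split x y :: chunk l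

theorem chunk_flat {α : Type} : ∀ l : List α, flat (chunk l) = l
  | [] => rfl
  | [x] => rfl
  | x :: y :: l => by simp [chunk, Grp.exp, chunk_flat l]

theorem chunk_nu {α : Type} : ∀ l : List α, 2 * nuG (chunk l) ≤ 3 * l.length + 1
  | [] => by simp [chunk, nuG]
  | [x] => by simp [chunk, nuG, Grp.w]
  | x :: y :: l => by
    have := chunk_nu l
    simp only [chunk, nuG_cons, Grp.w, List.length_cons]; omega

theorem chunk_items {α : Type} : ∀ l : List α,
    items (chunk l) = mW (l.map fun x => [x])
  | [] => rfl
  | [x] => by simp [chunk, items, Grp.it]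
  | x :: y :: l => by
    simp only [chunk, Grp.it, chunk_items l, items_cons, List.map_cons, mW_cons,
      Multiset.insert_eq_cons, ← Multiset.singleton_add, add_assoc]

theorem reach_final {α : Type} {G : List (Grp α)} {t : List α} (h : T G t) :
    ∃ n ≤ 3, Reach n t (flat G) := by
  have key : ∀ t : List α, t ~r flat G → ∃ u v, t = u ++ v ∧ flat G = v ++ u := by
    rintro t ⟨n, hn⟩
    obtain ⟨m, hm, h⟩ := (List.isRotated_iff_mod.1 ⟨n, hn⟩)
    exact ⟨t.take m, t.drop m, by simp, by rw [← h, List.rotate_eq_drop_append_take hm]⟩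
  rcases h with h | h
  · obtain ⟨u, v, rfl, h2⟩ := key _ h
    rw [h2]
    refine ⟨3, le_rfl, Reach.trans (n := 2) (m := 1) (b := u.reverse ++ v.reverse)
      (Reach.trans (n := 1) (m := 1) (b := u.reverse ++ v) ?_ ?_) ?_⟩
    · exact pre u v rfl rfl
    · exact suf u.reverse v rfl rfl
    · exact pre (u.reverse ++ v.reverse) [] (by simp) (by simp)
  · obtain ⟨u, v, h1, h2⟩ := key _ h
    have h1 : t = v.reverse ++ u.reverse := by
      rw [← List.reverse_reverse t, h1]; simp
    rw [h2, h1]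
    refine ⟨2, by norm_num, 
      (Reach.trans (n := 1) (m := 1) (b := v ++ u.reverse) ?_ ?_)⟩
    · exact pre v.reverse u.reverse rfl (by simp)
    · exact suf v u.reverse rfl (by simp)

theorem list_bound {α : Type} {a b : List α} (hb : b ≠ []) (h : a.Perm b) :
    ∃ n, 2 * n ≤ 3 * b.length + 3 ∧ Reach n a b := by
  have h1 := chunk_items b
  obtain ⟨t, n, hn, hr, ht⟩ := main (nuG (chunk b)) (chunk b) (a.map fun x => [x]) le_rfl
    (by intro h0; have := chunk_flat b; rw [h0] at this; exact hb this.symm)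
    (by rw [h1]; simp only [mW, Multiset.coe_eq_coe]; exact (h.map _).map _)
  obtain ⟨m, hm, hr2⟩ := reach_final ht
  rw [chunk_flat] at hr2
  have h3 : (a.map fun x => [x]).flatten = a := by
    clear * -
    induction a <;> simp_all
  rw [h3] at hr
  have := chunk_nu b
  exact ⟨n + m, by omega, hr.trans hr2⟩

theorem exists_perm {k : ℕ} {l : List (Fin k)} {π : Equiv.Perm (Fin k)}
    (h : l.Perm (List.ofFn π)) : ∃ τ : Equiv.Perm (Fin k), l = List.ofFn τ := by
  have hl : l.length = k := by simpa using h.length_eq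
  have hn : l.Nodup := h.nodup_iff.2 (List.nodup_ofFn.2 π.injective)
  have hi : Function.Injective (fun i : Fin k => l[(i : ℕ)]'(by omega)) := by
    intro i j hij
    exact Fin.ext ((hn.getElem_inj_iff).1 hij)
  refine ⟨Equiv.ofBijective _ (Finite.injective_iff_bijective.1 hi), ?_⟩
  apply List.ext_getElem
  · simpa using hl
  · intro i h1 h2
    simp

theorem step_perm {α : Type} {a b : List α} (h : Step a b) : b.Perm a := by
  obtain ⟨u, v, rfl, rfl | rfl⟩ := h
  · exact (List.reverse_perm u).append_right v
  · exact (List.reverse_perm v).append_left u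

theorem step_rel {k : ℕ} {π τ : Equiv.Perm (Fin k)}
    (h : Step (List.ofFn π) (List.ofFn τ)) : PrefixRev k τ π ∨ SuffixRev k τ π := by
  obtain ⟨u, v, h1, h2⟩ := h
  have hk : k = u.length + v.length := by
    have := congrArg List.length h1; simpa using this
  have e1 : ∀ (i : ℕ) (hi : i < k), π ⟨i, hi⟩ = (u ++ v)[i]'(by simp; omega) := by
    intro i hi; simp [← h1]
  rcases h2 with h2 | h2
  · left
    have e2 : ∀ (i : ℕ) (hi : i < k),
        τ ⟨i, hi⟩ = (u.reverse ++ v)[i]'(by simp; omega) := by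
      intro i hi; simp [← h2]
    refine ⟨u.length, by omega, ?_, ?_⟩
    · rintro ⟨i, hi⟩ h
      simp only at h
      rw [e1, e2, List.getElem_append_right (by simpa using h), List.getElem_append_right h]
      simp
    · rintro ⟨i, hi⟩ h
      simp only at h
      rw [e1, e2, List.getElem_append_left (by simpa using h),
        List.getElem_append_left (by omega), List.getElem_reverse]
  · right
    have e2 : ∀ (i : ℕ) (hi : i < k),
        τ ⟨i, hi⟩ = (u ++ v.reverse)[i]'(by simp; omega) := by
      intro i hi; simp [← h2]
    refine ⟨u.length, ?_, ?_⟩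
    · rintro ⟨i, hi⟩ h
      simp only at h
      rw [e1, e2, List.getElem_append_left h, List.getElem_append_left h]
    · rintro ⟨i, hi⟩ h
      simp only at h
      rw [e1, e2, List.getElem_append_right h, List.getElem_append_right (by simp),
        List.getElem_reverse]
      have e : v.length - 1 - (i - u.length) = k - 1 - i + u.length - u.length := by omega
      simp only [e]

theorem step_edist {k : ℕ} {π τ : Equiv.Perm (Fin k)}
    (h : Step (List.ofFn π) (List.ofFn τ)) : (prefixSuffixGraph k).edist π τ ≤ 1 := by
  by_cases e : π = τ
  · subst e; simp
  · have : (prefixSuffixGraph k).Adj π τ := by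
      rw [prefixSuffixGraph, SimpleGraph.fromRel_adj]
      exact ⟨e, Or.inr (step_rel h)⟩
    exact (SimpleGraph.edist_eq_one_iff_adj.2 this).le

theorem reach_edist {k n : ℕ} {a b : List (Fin k)} (h : Reach n a b)
    (π : Equiv.Perm (Fin k)) (ha : a = List.ofFn π) :
    ∃ τ : Equiv.Perm (Fin k), b = List.ofFn τ ∧ (prefixSuffixGraph k).edist π τ ≤ n := by
  induction h with
  | refl => exact ⟨π, ha, by simp⟩
  | tail _ s ih =>
    obtain ⟨σ, rfl, h2⟩ := ih ha
    obtain ⟨τ, rfl⟩ := exists_perm (step_perm s)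
    refine ⟨τ, rfl, (SimpleGraph.edist_triangle (v := σ)).trans ?_⟩
    · push_cast
      exact add_le_add h2 (step_edist s)

theorem edist_bound {k : ℕ} (hk : 1 ≤ k) (π σ : Equiv.Perm (Fin k)) :
    (prefixSuffixGraph k).edist π σ ≤ ((3 * k + 3) / 2 : ℕ) := by
  have hp : (List.ofFn π).Perm (List.ofFn σ) := by
    rw [List.perm_ext_iff_of_nodup (List.nodup_ofFn.2 π.injective)
      (List.nodup_ofFn.2 σ.injective)]
    intro a
    simp only [List.mem_ofFn]
    exact ⟨fun _ => σ.surjective a, fun _ => π.surjective a⟩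
  obtain ⟨n, hn, hr⟩ := list_bound
    (by intro h; have := congrArg List.length h; simp at this; omega) hp
  obtain ⟨τ, h1, h2⟩ := reach_edist hr π rfl
  have : σ = τ := by
    ext i
    rw [List.ofFn_inj.1 h1]
  subst this
  refine h2.trans ?_
  simp only [List.length_ofFn] at hn
  exact_mod_cast (by omega : n ≤ (3 * k + 3) / 2)

end PSR

/-- For every integer `k ≥ 1`, `h(k) ≤ (3/2)k + 4`, where `h(k)` is the
diameter of the graph `G_k` on permutations of `[k]` whose edges are prefix and suffix
reversals. -/
theorem statement_0 (k : ℕ) (hk : 1 ≤ k) :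
    ((prefixSuffixGraph k).diam : ℚ) ≤ 3 / 2 * (k : ℚ) + 4 := by
  have h : (prefixSuffixGraph k).ediam ≤ ((3 * k + 3) / 2 : ℕ) :=
    SimpleGraph.ediam_le_of_edist_le (PSR.edist_bound hk)
  have h2 : (prefixSuffixGraph k).diam ≤ (3 * k + 3) / 2 := by
    have := ENat.toNat_le_toNat h (ENat.natCast_ne_top _)
    simpa [SimpleGraph.diam] using this
  have h3 : 2 * (prefixSuffixGraph k).diam ≤ 3 * k + 3 := by omega
  have h4 : 2 * ((prefixSuffixGraph k).diam : ℚ) ≤ 3 * k + 3 := by exact_mod_cast h3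
  linarith
end

section
/- For every even integer k = 2d with d ≥ 1, h(k) ≤ (3/2)·k + 2, where h(k) is the diameter of the graph G_k on the permutations of [k] whose edges are prefix and suffix reversals. -/
namespace PS
variable {α : Type*}

def Step (l l' : List α) : Prop :=
  ∃ u v, l = u ++ v ∧ (l' = u.reverse ++ v ∨ l' = u ++ v.reverse)

inductive Reach : ℕ → List α → List α → Prop
  | refl (l) : Reach 0 l l
  | step {n l m l'} : Step l m → Reach n m l' → Reach (n+1) l l'

theorem Step.perm {l l' : List α} (h : Step l l') : l.Perm l' := by
  obtain ⟨u, v, rfl, rfl | rfl⟩ := h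
  · exact (List.reverse_perm u).symm.append_right v
  · exact (List.reverse_perm v).symm.append_left u

theorem Reach.perm {n : ℕ} {l l' : List α} (h : Reach n l l') : l.Perm l' := by
  induction h with
  | refl => exact List.Perm.refl _
  | step h _ ih => exact h.perm.trans ih

theorem Reach.trans {n m : ℕ} {a b c : List α} (h : Reach n a b) (h' : Reach m b c) :
    Reach (n + m) a c := by
  induction h with
  | refl => simpa using h'
  | step h _ ih =>
    have := Reach.step h (ih h')
    convert this using 1
    omega

theorem stepP (u v : List α) : Step (u ++ v) (u.reverse ++ v) := ⟨u, v, rfl, Or.inl rfl⟩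
theorem stepS (u v : List α) : Step (u ++ v) (u ++ v.reverse) := ⟨u, v, rfl, Or.inr rfl⟩

inductive Blk (φ ψ : α → α) : List α → Prop
  | pair (x) : Blk φ ψ [x, φ x]
  | cons (x l) : Blk φ ψ (ψ (φ x) :: l) → Blk φ ψ (x :: φ x :: ψ (φ x) :: l)

variable {φ ψ : α → α}

theorem Blk.append {A : List α} (h : Blk φ ψ A) : ∀ u, A.getLast? = some u → ∀ t,
    Blk φ ψ (ψ u :: t) → Blk φ ψ (A ++ ψ u :: t) := by
  induction h with
  | pair x =>
    intro u hu t ht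
    simp at hu
    subst hu
    exact Blk.cons x t ht
  | cons x l _ ih =>
    intro u hu t ht
    refine Blk.cons x _ (ih u ?_ t ht)
    simpa using hu

theorem Blk.rev (hφ : ∀ x, φ (φ x) = x) (hψ : ∀ x, ψ (ψ x) = x) {A : List α}
    (h : Blk φ ψ A) : Blk φ ψ A.reverse := by
  induction h with
  | pair x =>
    have := Blk.pair (φ := φ) (ψ := ψ) (φ x)
    simpa [hφ] using this
  | cons x l _ ih =>
    have h2 := Blk.pair (φ := φ) (ψ := ψ) (φ x)
    rw [hφ] at h2
    have := ih.append (ψ (φ x)) (by simp) [x] (by rw [hψ]; exact h2)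
    simpa [hψ] using this

theorem Blk.closed (hφ : ∀ x, φ (φ x) = x) {A : List α}
    (h : Blk φ ψ A) : ∀ z ∈ A, φ z ∈ A := by
  induction h with
  | pair x => intro z hz; simp at hz; rcases hz with rfl | rfl <;> simp [hφ]
  | cons x l _ ih =>
    intro z hz
    rw [List.mem_cons, List.mem_cons] at hz
    rcases hz with rfl | rfl | hz
    · simp
    · simp [hφ]
    · exact List.mem_cons_of_mem _ (List.mem_cons_of_mem _ (ih z hz))

theorem Blk.mem (hψ : ∀ x, ψ (ψ x) = x) {A : List α}
    (h : Blk φ ψ A) : ∀ z ∈ A, A.head? = some z ∨ A.getLast? = some z ∨ ψ z ∈ A.tail := by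
  induction h with
  | pair x => intro z hz; simp at hz; rcases hz with rfl | rfl <;> simp
  | cons x l _ ih =>
    intro z hz
    rw [List.mem_cons, List.mem_cons] at hz
    rcases hz with rfl | rfl | hz
    · simp
    · simp
    · rcases ih z hz with h | h | h
      · simp at h; subst h; simp [hψ]
      · right; left; simpa using h
      · right; right; simp at h ⊢; simp [h]

theorem Blk.ne {A : List α} (h : Blk φ ψ A) : 2 ≤ A.length := by
  cases h <;> simp

def wt (p : List α) : ℕ := if p.length = 1 then 3 else 4
def pot (L : List (List α)) : ℕ := (L.map wt).sum
def RR (L : List (List α)) : List (List α) := (L.map List.reverse).reverse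

theorem RR_flatten (L : List (List α)) : (RR L).flatten = L.flatten.reverse := by
  rw [RR, List.reverse_flatten]

theorem RR_pot (L : List (List α)) : pot (RR L) = pot L := by
  have : wt ∘ List.reverse = (wt : List α → ℕ) := by funext p; simp [wt]
  simp [pot, RR, List.sum_reverse, this]

theorem pot_append (L M : List (List α)) : pot (L ++ M) = pot L + pot M := by simp [pot]
theorem pot_cons (p) (M : List (List α)) : pot (p :: M) = wt p + pot M := by simp [pot]
theorem wt_sing (x : α) : wt [x] = 3 := rfl
theorem Blk.wt {A : List α} (h : Blk φ ψ A) : wt A = 4 := by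
  have := h.ne
  unfold PS.wt
  rw [if_neg (by omega)]

def Good (φ ψ : α → α) (p : List α) : Prop := (∃ x, p = [x]) ∨ Blk φ ψ p

theorem Good.rev (hφ : ∀ x, φ (φ x) = x) (hψ : ∀ x, ψ (ψ x) = x) {p : List α}
    (h : Good φ ψ p) : Good φ ψ p.reverse := by
  rcases h with ⟨x, rfl⟩ | h
  · exact Or.inl ⟨x, rfl⟩
  · exact Or.inr (h.rev hφ hψ)

theorem RR_good (hφ : ∀ x, φ (φ x) = x) (hψ : ∀ x, ψ (ψ x) = x) {L : List (List α)}
    (h : ∀ p ∈ L, Good φ ψ p) : ∀ p ∈ RR L, Good φ ψ p := by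
  intro p hp
  simp only [RR, List.mem_reverse, List.mem_map] at hp
  obtain ⟨q, hq, rfl⟩ := hp
  exact (h q hq).rev hφ hψ

theorem find_piece {L : List (List α)} {x : α} (h : x ∈ L.flatten) :
    ∃ X P Y, L = X ++ P :: Y ∧ x ∈ P := by
  obtain ⟨P, hP, hx⟩ := List.mem_flatten.1 h
  obtain ⟨X, Y, rfl⟩ := List.append_of_mem hP
  exact ⟨X, P, Y, rfl, hx⟩

theorem main (hφ : ∀ x, φ (φ x) = x) (hψ : ∀ x, ψ (ψ x) = x) (hφn : ∀ x, φ x ≠ x)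
    (hψn : ∀ x, ψ x ≠ x) (a0 : α)
    (conn : ∀ s : List α, s ≠ [] → (∀ x ∈ s, φ x ∈ s) → (∀ x ∈ s, ψ x ∈ s) → ∀ x, x ∈ s) :
    ∀ N : ℕ, ∀ L : List (List α), L.length = N → (∀ p ∈ L, Good φ ψ p) → L.flatten.Nodup →
      (∀ x, x ∈ L.flatten) → ∃ n l, Reach n L.flatten l ∧ Blk φ ψ l ∧ 2 * n + 4 ≤ pot L := by
  intro N
  induction N using Nat.strong_induction_on with
  | _ N ih =>
  intro L hN hg hnd hall
  -- packaged induction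
  have key : ∀ (m : ℕ) (L' : List (List α)), L'.length < N → (∀ p ∈ L', Good φ ψ p) →
      Reach m L.flatten L'.flatten → pot L' + 2 * m ≤ pot L →
      ∃ n l, Reach n L.flatten l ∧ Blk φ ψ l ∧ 2 * n + 4 ≤ pot L := by
    intro m L' h1 h2 h3 h4
    obtain ⟨n, l, hr, hb, hp⟩ := ih _ h1 L' rfl h2 (h3.perm.nodup_iff.1 hnd)
      (fun x => h3.perm.mem_iff.1 (hall x))
    exact ⟨m + n, l, h3.trans hr, hb, by omega⟩
  match L, hN, hg, hnd, hall, key with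
  | [], _, _, _, hall, _ => exact absurd (hall a0) (by simp)
  | B :: rest, hN, hg, hnd, hall, key =>
  have hgr : ∀ p ∈ rest, Good φ ψ p := fun p hp => hg p (List.mem_cons_of_mem _ hp)
  rcases hg B (by simp) with ⟨x, rfl⟩ | hB
  · have hx : φ x ∈ rest.flatten := by
      have := hall (φ x)
      simpa [hφn] using this
    obtain ⟨X, P, Y, rfl, hP⟩ := find_piece hx
    rcases hgr P (by simp) with ⟨y, rfl⟩ | hPB
    · simp only [List.mem_singleton] at hP
      subst hP
      refine key 1 (RR X ++ [x, φ x] :: Y) ?_ ?_ ?_ ?_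
      · simp [RR] at hN ⊢; omega
      · intro p hp
        rw [List.mem_append, List.mem_cons] at hp
        rcases hp with hp | rfl | hp
        · exact RR_good hφ hψ (fun p hp => hgr p (by simp [hp])) p hp
        · exact Or.inr (Blk.pair x)
        · exact hgr p (by simp [hp])
      · refine Reach.step (m := ([x] ++ X.flatten).reverse ++ (φ x :: Y.flatten)) ?_ ?_
        · convert stepP ([x] ++ X.flatten) (φ x :: Y.flatten) using 1
          simp
        · convert Reach.refl _ using 1
          simp [RR_flatten]
      · simp only [pot_append, pot_cons, RR_pot, wt_sing, (Blk.pair (φ := φ) (ψ := ψ) x).wt]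
        omega
    · exfalso
      have := hPB.closed hφ _ hP
      rw [hφ] at this
      simp [List.nodup_append] at hnd
      tauto
  · by_cases hrest : rest = []
    · subst hrest
      refine ⟨0, B, by simpa using Reach.refl B, hB, ?_⟩
      simp [pot_cons, hB.wt]
    obtain ⟨a, t, rfl⟩ : ∃ a t, B = a :: t := by cases hB <;> exact ⟨_, _, rfl⟩
    have hndB : (a :: t).Nodup := by
      rw [List.flatten_cons, List.nodup_append] at hnd; exact hnd.1
    have hdis : ∀ z ∈ a :: t, z ∉ rest.flatten := by
      rw [List.flatten_cons, List.nodup_append] at hnd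
      intro z hz hz'
      exact hnd.2.2 z hz z hz' rfl
    have hψa : ψ a ∉ a :: t := by
      intro hmem
      have hlast : (a :: t).getLast? = some (ψ a) := by
        rcases hB.mem hψ _ hmem with h | h | h
        · simp at h; exact absurd h.symm (hψn a)
        · exact h
        · rw [hψ] at h; simp at h; simp [h] at hndB
      have hcl : ∀ z ∈ a :: t, ψ z ∈ a :: t := by
        intro z hz
        rcases hB.mem hψ _ hz with h | h | h
        · simp at h; subst h; exact hmem
        · rw [hlast] at h; simp at h; subst h; simp [hψ]
        · exact List.mem_cons_of_mem _ h
      have hev := conn _ (by simp) (hB.closed hφ) hcl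
      cases rest with
      | nil => exact hrest rfl
      | cons p r =>
        rcases hgr p (by simp) with ⟨x, rfl⟩ | hp
        · exact hdis x (hev x) (by simp)
        · cases hp <;> exact hdis _ (hev _) (List.mem_flatten.2 ⟨_, List.mem_cons_self .., List.mem_cons_self ..⟩)
    have hx : ψ a ∈ rest.flatten := by
      have := hall (ψ a)
      rw [List.flatten_cons, List.mem_append] at this
      tauto
    have hBr := hB.rev hφ hψ
    have hBl : (a :: t).reverse.getLast? = some a := by simp
    obtain ⟨X, P, Y, rfl, hP⟩ := find_piece hx
    have hgX : ∀ p ∈ X, Good φ ψ p := fun p hp => hgr p (by simp [hp])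
    have hgY : ∀ p ∈ Y, Good φ ψ p := fun p hp => hgr p (by simp [hp])
    rcases hgr P (by simp) with ⟨y, rfl⟩ | hPB
    · simp only [List.mem_singleton] at hP
      subst hP
      have hnew : Blk φ ψ ((a :: t).reverse ++ [ψ a, φ (ψ a)]) :=
        hBr.append a hBl _ (Blk.pair _)
      have hf : φ (ψ a) ∈ X.flatten ∨ φ (ψ a) ∈ Y.flatten := by
        have := hall (φ (ψ a))
        rw [List.flatten_cons, List.mem_append] at this
        rcases this with h | h
        · have := hB.closed hφ _ h
          rw [hφ] at this; exact absurd this hψa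
        · simpa [hφn] using h
      have hnd2 : (X ++ [ψ a] :: Y).flatten.Nodup := by
        rw [List.flatten_cons, List.nodup_append] at hnd; exact hnd.2.1
      rcases hf with hf | hf
      · obtain ⟨X1, Q, X2, rfl, hQ⟩ := find_piece hf
        rcases hgX Q (by simp) with ⟨y, rfl⟩ | hQB
        · simp only [List.mem_singleton] at hQ
          subst hQ
          refine key 3 (RR X1 ++ ((a :: t).reverse ++ [ψ a, φ (ψ a)]) :: (X2 ++ Y)) ?_ ?_ ?_ ?_
          · simp [RR] at hN ⊢; omega
          · intro p hp
            rw [List.mem_append, List.mem_cons, List.mem_append] at hp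
            rcases hp with hp | rfl | hp | hp
            · exact RR_good hφ hψ (fun p hp => hgX p (by simp [hp])) p hp
            · exact Or.inr hnew
            · exact hgX p (by simp [hp])
            · exact hgY p hp
          · generalize a :: t = B
            generalize ψ a = b
            generalize φ b = c
            refine Reach.step (m := (B ++ X1.flatten ++ [c] ++ X2.flatten).reverse ++ ([b] ++ Y.flatten)) ?_ <|
              Reach.step (m := ((B ++ X1.flatten ++ [c] ++ X2.flatten).reverse ++ [b]).reverse ++ (Y.flatten)) ?_ <|
              Reach.step (m := ([b] ++ B ++ X1.flatten).reverse ++ ([c] ++ X2.flatten ++ Y.flatten)) ?_ ?_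
            · convert stepP (B ++ X1.flatten ++ [c] ++ X2.flatten) ([b] ++ Y.flatten) using 1
              simp
            · convert stepP ((B ++ X1.flatten ++ [c] ++ X2.flatten).reverse ++ [b]) (Y.flatten) using 1
              simp
            · convert stepP ([b] ++ B ++ X1.flatten) ([c] ++ X2.flatten ++ Y.flatten) using 1
              simp
            · convert Reach.refl _ using 1
              simp [RR_flatten]
          · simp only [pot_append, pot_cons, RR_pot, wt_sing, hnew.wt, hB.wt]
            omega
        · exfalso
          have := hQB.closed hφ _ hQ
          rw [hφ] at this
          simp [List.nodup_append] at hnd2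
          grind
      · obtain ⟨Y1, Q, Y2, rfl, hQ⟩ := find_piece hf
        rcases hgY Q (by simp) with ⟨y, rfl⟩ | hQB
        · simp only [List.mem_singleton] at hQ
          subst hQ
          refine key 3 (RR (X ++ Y1) ++ ((a :: t).reverse ++ [ψ a, φ (ψ a)]) :: Y2) ?_ ?_ ?_ ?_
          · simp [RR] at hN ⊢; omega
          · intro p hp
            rw [List.mem_append, List.mem_cons] at hp
            rcases hp with hp | rfl | hp
            · refine RR_good hφ hψ (fun p hp => ?_) p hp
              rw [List.mem_append] at hp
              rcases hp with hp | hp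
              · exact hgX p hp
              · exact hgY p (by simp [hp])
            · exact Or.inr hnew
            · exact hgY p (by simp [hp])
          · generalize a :: t = B
            generalize ψ a = b
            generalize φ b = c
            refine Reach.step (m := (B ++ X.flatten).reverse ++ ([b] ++ Y1.flatten ++ [c] ++ Y2.flatten)) ?_ <|
              Reach.step (m := ((B ++ X.flatten).reverse ++ [b]).reverse ++ (Y1.flatten ++ [c] ++ Y2.flatten)) ?_ <|
              Reach.step (m := ([b] ++ B ++ X.flatten ++ Y1.flatten).reverse ++ ([c] ++ Y2.flatten)) ?_ ?_
            · convert stepP (B ++ X.flatten) ([b] ++ Y1.flatten ++ [c] ++ Y2.flatten) using 1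
              simp
            · convert stepP ((B ++ X.flatten).reverse ++ [b]) (Y1.flatten ++ [c] ++ Y2.flatten) using 1
              simp
            · convert stepP ([b] ++ B ++ X.flatten ++ Y1.flatten) ([c] ++ Y2.flatten) using 1
              simp
            · convert Reach.refl _ using 1
              simp [RR_flatten]
          · simp only [pot_append, pot_cons, RR_pot, wt_sing, hnew.wt, hB.wt]
            omega
        · exfalso
          have := hQB.closed hφ _ hQ
          rw [hφ] at this
          simp [List.nodup_append] at hnd2
          grind
    · have hdisP : a ∉ P := fun h => hdis a (by simp) (by
        rw [List.mem_flatten]; exact ⟨P, by simp, h⟩)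
      rcases hPB.mem hψ _ hP with h | h | h
      · obtain ⟨s, rfl⟩ : ∃ s, P = ψ a :: s := by
          cases P with
          | nil => simp at h
          | cons p s => simp at h; subst h; exact ⟨s, rfl⟩
        have hnew : Blk φ ψ ((a :: t).reverse ++ ψ a :: s) := hBr.append a hBl _ hPB
        refine key 1 (RR X ++ ((a :: t).reverse ++ ψ a :: s) :: Y) ?_ ?_ ?_ ?_
        · simp [RR] at hN ⊢; omega
        · intro p hp
          rw [List.mem_append, List.mem_cons] at hp
          rcases hp with hp | rfl | hp
          · exact RR_good hφ hψ hgX p hp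
          · exact Or.inr hnew
          · exact hgY p hp
        · generalize a :: t = B
          generalize ψ a :: s = P
          refine Reach.step (m := (B ++ X.flatten).reverse ++ (P ++ Y.flatten)) ?_ ?_
          · convert stepP (B ++ X.flatten) (P ++ Y.flatten) using 1
            simp
          · convert Reach.refl _ using 1
            simp [RR_flatten]
        · simp only [pot_append, pot_cons, RR_pot, hnew.wt, hB.wt, hPB.wt]
          omega
      · have hPr := hPB.rev hφ hψ
        obtain ⟨s, hs⟩ : ∃ s, P.reverse = ψ a :: s := by
          rw [← List.head?_reverse] at h
          cases hq : P.reverse with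
          | nil => simp [hq] at h
          | cons p s => simp [hq] at h; subst h; exact ⟨s, rfl⟩
        have hnew : Blk φ ψ ((a :: t).reverse ++ P.reverse) := by
          rw [hs] at hPr ⊢
          exact hBr.append a hBl _ hPr
        refine key 2 (Y ++ RR X ++ [(a :: t).reverse ++ P.reverse]) ?_ ?_ ?_ ?_
        · simp [RR] at hN ⊢; omega
        · intro p hp
          rw [List.mem_append, List.mem_append, List.mem_singleton] at hp
          rcases hp with (hp | hp) | rfl
          · exact hgY p hp
          · exact RR_good hφ hψ hgX p hp
          · exact Or.inr hnew
        · generalize a :: t = B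
          refine Reach.step (m := (B ++ X.flatten) ++ (P ++ Y.flatten).reverse) ?_ <|
            Reach.step (m := (B ++ X.flatten ++ Y.flatten.reverse).reverse ++ P.reverse) ?_ ?_
          · convert stepS (B ++ X.flatten) (P ++ Y.flatten) using 1
            simp
          · convert stepP (B ++ X.flatten ++ Y.flatten.reverse) P.reverse using 1
            simp
          · convert Reach.refl _ using 1
            simp [RR_flatten]
        · simp only [pot_append, pot_cons, RR_pot, hnew.wt, hB.wt, hPB.wt]
          simp [pot]; omega
      · rw [hψ] at h
        exact absurd (List.mem_of_mem_tail h) hdisP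
end PS
namespace PS

theorem Reach.map {α β : Type*} (f : α → β) {n : ℕ} {l l' : List α} (h : Reach n l l') :
    Reach n (l.map f) (l'.map f) := by
  induction h with
  | refl => exact Reach.refl _
  | step h _ ih =>
    refine Reach.step ?_ ih
    obtain ⟨u, v, rfl, rfl | rfl⟩ := h
    · exact ⟨u.map f, v.map f, by simp, Or.inl (by simp)⟩
    · exact ⟨u.map f, v.map f, by simp, Or.inr (by simp)⟩

theorem step_adj {k : ℕ} {π : Equiv.Perm (Fin k)} {l : List (Fin k)}
    (h : Step (List.ofFn π) l) :
    ∃ τ : Equiv.Perm (Fin k), l = List.ofFn τ ∧ (PrefixRev k τ π ∨ SuffixRev k τ π) := by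
  have hp := h.perm
  have hlen : l.length = k := by rw [← hp.length_eq]; simp
  have hnd : l.Nodup := hp.nodup_iff.1 (List.nodup_ofFn.2 π.injective)
  have hinj : Function.Injective (fun i : Fin k => l[(i : ℕ)]'(by rw [hlen]; exact i.isLt)) := by
    intro i j hij
    have := (hnd.getElem_inj_iff).1 hij
    exact Fin.ext this
  refine ⟨Equiv.ofBijective _ (Finite.injective_iff_bijective.1 hinj), ?_, ?_⟩
  · apply List.ext_getElem
    · simp [hlen]
    · intro i h1 h2; simp
  · obtain ⟨u, v, huv, hl⟩ := h
    have hk : u.length + v.length = k := by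
      have := congrArg List.length huv
      simpa using this.symm
    have hπ : ∀ i : Fin k, π i = (u ++ v)[(i : ℕ)]'(by simp [hk]) := by
      intro i
      have : π i = (List.ofFn π)[(i : ℕ)]'(by simp) := by simp
      rw [this]
      congr 1
    rcases hl with hl | hl
    · left
      refine ⟨u.length, by omega, ?_, ?_⟩
      · intro i hi
        rw [hπ]
        simp only [Equiv.ofBijective_apply, hl]
        rw [List.getElem_append_right (by simpa using hi), List.getElem_append_right hi]
        simp
      · intro i hi
        rw [hπ]
        simp only [Equiv.ofBijective_apply, hl]
        rw [List.getElem_append_left (by simpa using hi), List.getElem_append_left (by omega)]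
        simp
    · right
      refine ⟨u.length, ?_, ?_⟩
      · intro i hi
        rw [hπ]
        simp only [Equiv.ofBijective_apply, hl]
        rw [List.getElem_append_left hi, List.getElem_append_left hi]
      · intro i hi
        rw [hπ]
        have := i.isLt
        simp only [Equiv.ofBijective_apply, hl]
        rw [List.getElem_append_right hi, List.getElem_append_right (by simp), List.getElem_reverse]
        congr 1
        omega

theorem reach_edist {k n : ℕ} {l l' : List (Fin k)} (h : Reach n l l') :
    ∀ π τ : Equiv.Perm (Fin k), l = List.ofFn π → l' = List.ofFn τ →
      (prefixSuffixGraph k).edist π τ ≤ n := by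
  induction h with
  | refl l =>
    intro π τ h1 h2
    have : π = τ := by
      rw [h1] at h2
      exact Equiv.ext (congrFun (List.ofFn_injective h2))
    subst this
    simp
  | step h _ ih =>
    intro π τ h1 h2
    subst h1
    obtain ⟨σ, hσ, hadj⟩ := step_adj h
    have h3 := ih σ τ hσ h2
    have h4 : (prefixSuffixGraph k).edist π σ ≤ 1 := by
      by_cases he : π = σ
      · subst he; simp
      · have : (prefixSuffixGraph k).Adj π σ := by
          rw [prefixSuffixGraph, SimpleGraph.fromRel_adj]
          exact ⟨he, Or.inr hadj⟩
        exact (SimpleGraph.edist_eq_one_iff_adj.2 this).le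
    calc _ ≤ _ := SimpleGraph.edist_triangle (v := σ)
      _ ≤ 1 + _ := add_le_add h4 h3
      _ = _ := by push_cast; rw [add_comm]

theorem partner_val (d : ℕ) (j : Fin (2 * d)) :
    (partner d j : ℕ) = if (j : ℕ) % 2 = 0 then (j : ℕ) + 1 else (j : ℕ) - 1 := rfl

theorem prevVal_val (d : ℕ) (j : Fin (2 * d)) :
    (prevVal d j : ℕ) = if (j : ℕ) % 2 = 0 then (if (j : ℕ) = 0 then 2 * d - 1 else (j : ℕ) - 1)
      else (if (j : ℕ) + 1 = 2 * d then 0 else (j : ℕ) + 1) := by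
  have hj := j.isLt
  simp only [prevVal]
  split_ifs with h1 h2 h2
  · rw [h2, Nat.mod_eq_of_lt] <;> omega
  · rw [show (j : ℕ) + 2 * d - 1 = (j - 1) + 2 * d by omega, Nat.add_mod_right, Nat.mod_eq_of_lt]
    omega
  · rw [h2, Nat.mod_self]
  · rw [Nat.mod_eq_of_lt]; omega

def S (d : ℕ) (u v : Fin (2 * d)) : Prop :=
  (v : ℕ) = if (u : ℕ) + 1 = 2 * d then 0 else (u : ℕ) + 1

theorem blk_chain {d : ℕ} {l : List (Fin (2 * d))} (h : Blk (partner d) (prevVal d) l) :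
    ∀ a, l.head? = some a → ((a : ℕ) % 2 = 0 → l.IsChain (S d)) ∧
      ((a : ℕ) % 2 = 1 → l.IsChain (fun u v => S d v u)) := by
  have P := partner_val d
  have Q := prevVal_val d
  induction h with
  | pair x =>
    intro a ha
    simp at ha; subst ha
    have := x.isLt
    have := P x
    constructor
    · intro h; simp [S]; split_ifs at * <;> omega
    · intro h; simp [S]; split_ifs at * <;> omega
  | cons x l _ ih =>
    intro a ha
    simp at ha; subst ha
    have h0 := x.isLt
    have h1 := P x
    have h2 := Q (partner d x)
    have ih := ih _ rfl
    constructor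
    · intro h
      refine List.IsChain.cons_cons ?_ (List.IsChain.cons_cons ?_ (ih.1 ?_))
      · unfold S; split_ifs at * <;> omega
      · unfold S; split_ifs at * <;> omega
      · split_ifs at * <;> omega
    · intro h
      refine List.IsChain.cons_cons ?_ (List.IsChain.cons_cons ?_ (ih.2 ?_))
      · unfold S; split_ifs at * <;> omega
      · unfold S; split_ifs at * <;> omega
      · split_ifs at * <;> omega

theorem chain_finish {d : ℕ} {l : List (Fin (2 * d))} (h : l.IsChain (S d))
    (hl : l.length = 2 * d) (hd : 1 ≤ d) : Reach 3 l (List.finRange (2 * d)) := by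
  have h0 : 0 < l.length := by omega
  obtain ⟨a, ha⟩ : ∃ a, a = (l[0] : ℕ) := ⟨_, rfl⟩
  have ha2 : a < 2 * d := by rw [ha]; exact (l[0]).isLt
  have hget : ∀ i (hi : i < l.length), (l[i] : ℕ) = if a + i < 2 * d then a + i else a + i - 2 * d := by
    intro i
    induction i with
    | zero => intro hi; rw [← ha]; simp [ha2]
    | succ i ih =>
      intro hi
      have h1 := ih (by omega)
      have h2 := List.isChain_iff_getElem.1 h i hi
      unfold S at h2
      rw [h2, h1]
      split_ifs <;> omega
  have hfin : l.drop (2 * d - a) ++ l.take (2 * d - a) = List.finRange (2 * d) := by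
    apply List.ext_getElem
    · simp [hl]
    · intro i h1 h2
      apply Fin.ext
      simp at h2
      simp only [List.getElem_finRange, Fin.val_cast]
      by_cases hi : i < a
      · rw [List.getElem_append_left (by simp [hl]; omega), List.getElem_drop, hget]
        split_ifs <;> omega
      · rw [List.getElem_append_right (by simp [hl]; omega), List.getElem_take, hget]
        simp only [List.length_drop, hl]
        split_ifs <;> omega
  rw [← hfin]
  conv => arg 2; rw [← List.take_append_drop (2 * d - a) l]
  generalize l.take (2 * d - a) = u
  generalize l.drop (2 * d - a) = v
  refine Reach.step (stepP u v) (Reach.step (stepS _ v) (Reach.step (m := v ++ u) ?_ (Reach.refl _)))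
  exact ⟨u.reverse ++ v.reverse, [], by simp, Or.inl (by simp)⟩

theorem finish {d : ℕ} {l : List (Fin (2 * d))} (h : Blk (partner d) (prevVal d) l)
    (hl : l.length = 2 * d) (hd : 1 ≤ d) : ∃ n, n ≤ 4 ∧ Reach n l (List.finRange (2 * d)) := by
  obtain ⟨a, ha⟩ : ∃ a, l.head? = some a := by cases h <;> exact ⟨_, rfl⟩
  rcases Nat.mod_two_eq_zero_or_one a with h2 | h2
  · exact ⟨3, by omega, chain_finish ((blk_chain h a ha).1 h2) hl hd⟩
  · refine ⟨4, le_rfl, Reach.step (m := l.reverse) ⟨l, [], by simp, Or.inl (by simp)⟩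
      (chain_finish ?_ (by simpa using hl) hd)⟩
    rw [List.isChain_reverse]
    exact (blk_chain h a ha).2 h2

theorem sort_list {d : ℕ} (hd : 1 ≤ d) (l : List (Fin (2 * d))) (hnd : l.Nodup)
    (hall : ∀ x, x ∈ l) : ∃ n, n ≤ 3 * d + 2 ∧ Reach n l (List.finRange (2 * d)) := by
  have P := partner_val d
  have Q := prevVal_val d
  have hlen : l.length = 2 * d := by
    have : l.toFinset = Finset.univ := by ext x; simp [hall]
    rw [← List.toFinset_card_of_nodup hnd, this]; simp
  have hfl : (l.map (fun x => [x])).flatten = l := by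
    clear hnd hall hlen
    induction l with
    | nil => rfl
    | cons a l ih => simp [ih]
  obtain ⟨n, l', hr, hb, hn⟩ := main (φ := partner d) (ψ := prevVal d)
    (by intro x; apply Fin.ext; have := x.isLt; have := P x; have := P (partner d x)
        split_ifs at * <;> omega)
    (by intro x; apply Fin.ext; have := x.isLt; have := Q x; have := Q (prevVal d x)
        split_ifs at * <;> omega)
    (by intro x hx; have := P x; rw [hx] at this; split_ifs at * <;> omega)
    (by intro x hx; have := Q x; rw [hx] at this; split_ifs at * <;> omega)
    ⟨0, by omega⟩
    (by
      intro s hs h1 h2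
      have up : ∀ j (hj : j + 1 < 2 * d), (⟨j, by omega⟩ : Fin (2 * d)) ∈ s →
          (⟨j + 1, hj⟩ : Fin (2 * d)) ∈ s := by
        intro j hj hm
        by_cases hp : j % 2 = 0
        · convert h1 _ hm using 1
          apply Fin.ext; rw [P]; simp [hp]
        · convert h2 _ hm using 1
          apply Fin.ext; rw [Q]; simp [hp]; omega
      have down : ∀ j (hj : j + 1 < 2 * d), (⟨j + 1, hj⟩ : Fin (2 * d)) ∈ s →
          (⟨j, by omega⟩ : Fin (2 * d)) ∈ s := by
        intro j hj hm
        by_cases hp : (j + 1) % 2 = 0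
        · convert h2 _ hm using 1
          apply Fin.ext; rw [Q]; simp [hp]
        · convert h1 _ hm using 1
          apply Fin.ext; rw [P]; simp [hp]
      have zero : (⟨0, by omega⟩ : Fin (2 * d)) ∈ s := by
        obtain ⟨x, hx⟩ := List.exists_mem_of_ne_nil s hs
        have : ∀ j (hj : j < 2 * d), (⟨j, hj⟩ : Fin (2 * d)) ∈ s →
            (⟨0, by omega⟩ : Fin (2 * d)) ∈ s := by
          intro j
          induction j with
          | zero => intro _ h; exact h
          | succ j ih => intro hj h; exact ih (by omega) (down j hj h)
        exact this x x.isLt hx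
      have : ∀ j (hj : j < 2 * d), (⟨j, hj⟩ : Fin (2 * d)) ∈ s := by
        intro j
        induction j with
        | zero => intro _; exact zero
        | succ j ih => intro hj; exact up j hj (ih (by omega))
      intro x
      exact this x x.isLt)
    _ (l.map (fun x => [x])) rfl
    (by intro p hp; obtain ⟨x, _, rfl⟩ := List.mem_map.1 hp; exact Or.inl ⟨x, rfl⟩)
    (by rw [hfl]; exact hnd) (by rw [hfl]; exact hall)
  rw [hfl] at hr
  have hpot : pot (l.map (fun x => [x])) = 3 * (2 * d) := by
    refine Eq.trans (b := 3 * l.length) ?_ (by rw [hlen])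
    clear hnd hall hlen hfl hr hn
    induction l with
    | nil => rfl
    | cons a l ih => rw [List.map_cons, pot_cons, ih, wt_sing, List.length_cons]; ring
  obtain ⟨m, hm, hr2⟩ := finish hb (by rw [← hr.perm.length_eq, hlen]) hd
  exact ⟨n + m, by omega, hr.trans hr2⟩

end PS

/-- For every even integer `k = 2d` with `d ≥ 1`, `h(k) ≤ (3/2)k + 2`. -/
theorem statement_1 (d : ℕ) (hd : 1 ≤ d) :
    ((prefixSuffixGraph (2 * d)).diam : ℚ) ≤ 3 / 2 * ((2 * d : ℕ) : ℚ) + 2 := by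
  have key : ∀ π τ : Equiv.Perm (Fin (2 * d)),
      (prefixSuffixGraph (2 * d)).edist π τ ≤ ((3 * d + 2 : ℕ) : ℕ∞) := by
    intro π τ
    obtain ⟨n, hn, hr⟩ := PS.sort_list hd (List.ofFn (τ⁻¹ * π))
      (List.nodup_ofFn.2 (τ⁻¹ * π).injective)
      (fun x => by rw [List.mem_ofFn]; exact (τ⁻¹ * π).surjective x)
    have h2 := PS.reach_edist (hr.map τ) π τ
      (by rw [List.map_ofFn]; congr 1; funext i; simp)
      (by rw [List.ofFn_eq_map])
    exact h2.trans (by exact_mod_cast hn)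
  have h1 : (prefixSuffixGraph (2 * d)).ediam ≤ ((3 * d + 2 : ℕ) : ℕ∞) :=
    SimpleGraph.ediam_le_of_edist_le key
  have h2 : (prefixSuffixGraph (2 * d)).diam ≤ 3 * d + 2 := by
    rw [SimpleGraph.diam]
    exact ENat.toNat_le_of_le_natCast h1
  have h3 : ((prefixSuffixGraph (2 * d)).diam : ℚ) ≤ ((3 * d + 2 : ℕ) : ℚ) := by exact_mod_cast h2
  push_cast at h3 ⊢
  linarith
end

section
/- For every integer k ≥ 1, h(k) ≤ h(k+1), i.e., the diameter of G_k is at most the diameter of G_{k+1}. -/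
theorem sF_iff {k : ℕ} {p : Fin (k+1)} (i : Fin k) :
    ((p.succAbove i : Fin (k+1)) : ℕ) = if (i:ℕ) < p then (i:ℕ) else i + 1 := by
  simp only [Fin.succAbove, Fin.lt_def, Fin.val_castSucc]
  split <;> simp

theorem delFun_ne {k : ℕ} (π : Equiv.Perm (Fin (k+1))) (i : Fin k) :
    π ((π.symm (Fin.last k)).succAbove i) ≠ Fin.last k := by
  intro h
  have h2 : (π.symm (Fin.last k)).succAbove i = π.symm (Fin.last k) :=
    (Equiv.eq_symm_apply π).2 h
  exact Fin.succAbove_ne _ _ h2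

/-- Delete the largest value. -/
noncomputable def del {k : ℕ} (π : Equiv.Perm (Fin (k+1))) : Equiv.Perm (Fin k) :=
  Equiv.ofBijective
    (fun i => (π ((π.symm (Fin.last k)).succAbove i)).castPred (delFun_ne π i))
    (Finite.injective_iff_bijective.1 (by
      intro i j h
      simpa using h))

theorem del_eq {k : ℕ} (π τ : Equiv.Perm (Fin (k+1))) (i j : Fin k)
    (h : π ((π.symm (Fin.last k)).succAbove i) = τ ((τ.symm (Fin.last k)).succAbove j)) :
    del π i = del τ j := by
  simp only [del, Equiv.ofBijective_apply, h]

theorem del_prefix {k : ℕ} (π τ : Equiv.Perm (Fin (k+1))) (h : PrefixRev (k+1) π τ) :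
    PrefixRev k (del π) (del τ) := by
  obtain ⟨t, ht, h1, h2⟩ := h
  have hp : π (π.symm (Fin.last k)) = Fin.last k := by simp
  by_cases hpt : t ≤ (π.symm (Fin.last k) : ℕ)
  · have hq : τ.symm (Fin.last k) = π.symm (Fin.last k) := by
      rw [Equiv.symm_apply_eq, ← h1 _ hpt, hp]
    refine ⟨t, by omega, ?_, ?_⟩
    · intro i hi
      apply del_eq
      rw [hq, h1]
      rw [sF_iff]; split <;> omega
    · intro i hi
      apply del_eq
      rw [hq, h2 _ (by rw [sF_iff]; split <;> omega)]
      congr 1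
      ext
      simp only [sF_iff]
      split <;> split <;> omega
  · push Not at hpt
    have hq : τ.symm (Fin.last k) = ⟨t - 1 - (π.symm (Fin.last k) : ℕ), by omega⟩ := by
      rw [Equiv.symm_apply_eq, ← h2 _ hpt, hp]
    refine ⟨t - 1, by omega, ?_, ?_⟩
    · intro i hi
      apply del_eq
      rw [hq, h1 _ (by rw [sF_iff]; split <;> omega)]
      congr 1
      ext
      simp only [sF_iff]
      split <;> split <;> omega
    · intro i hi
      apply del_eq
      rw [hq, h2 _ (by rw [sF_iff]; split <;> omega)]
      congr 1
      ext
      simp only [sF_iff]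
      split <;> split <;> omega

theorem del_suffix {k : ℕ} (π τ : Equiv.Perm (Fin (k+1))) (h : SuffixRev (k+1) π τ) :
    SuffixRev k (del π) (del τ) := by
  obtain ⟨t, h1, h2⟩ := h
  have hp : π (π.symm (Fin.last k)) = Fin.last k := by simp
  have hlt := (π.symm (Fin.last k)).isLt
  by_cases hpt : (π.symm (Fin.last k) : ℕ) < t
  · have hq : τ.symm (Fin.last k) = π.symm (Fin.last k) := by
      rw [Equiv.symm_apply_eq, ← h1 _ hpt, hp]
    refine ⟨t - 1, ?_, ?_⟩
    · intro i hi
      apply del_eq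
      rw [hq, h1]
      rw [sF_iff]; split <;> omega
    · intro i hi
      by_cases hi' : (i : ℕ) + 1 < t
      · omega
      have := i.isLt
      apply del_eq
      rw [hq, h2 _ (by rw [sF_iff]; split <;> omega)]
      congr 1
      ext
      simp only [sF_iff]
      split <;> split <;> omega
  · push Not at hpt
    have hq : τ.symm (Fin.last k) = ⟨k + 1 - 1 - (π.symm (Fin.last k) : ℕ) + t, by omega⟩ := by
      rw [Equiv.symm_apply_eq, ← h2 _ hpt, hp]
    refine ⟨t, ?_, ?_⟩
    · intro i hi
      apply del_eq
      rw [hq, h1 _ (by rw [sF_iff]; split <;> omega)]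
      congr 1
      ext
      simp only [sF_iff]
      split <;> split <;> omega
    · intro i hi
      have := i.isLt
      apply del_eq
      rw [hq, h2 _ (by rw [sF_iff]; split <;> omega)]
      congr 1
      ext
      simp only [sF_iff]
      split <;> split <;> omega

theorem del_adj {k : ℕ} (π τ : Equiv.Perm (Fin (k+1))) (h : (prefixSuffixGraph (k+1)).Adj π τ) :
    del π = del τ ∨ (prefixSuffixGraph k).Adj (del π) (del τ) := by
  by_cases he : del π = del τ
  · exact Or.inl he
  refine Or.inr ?_
  simp only [prefixSuffixGraph, SimpleGraph.fromRel_adj] at h ⊢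
  refine ⟨he, ?_⟩
  rcases h.2 with (h | h) | (h | h)
  · exact Or.inl (Or.inl (del_prefix _ _ h))
  · exact Or.inl (Or.inr (del_suffix _ _ h))
  · exact Or.inr (Or.inl (del_prefix _ _ h))
  · exact Or.inr (Or.inr (del_suffix _ _ h))

theorem del_walk {k : ℕ} (π τ : Equiv.Perm (Fin (k+1)))
    (w : (prefixSuffixGraph (k+1)).Walk π τ) :
    ∃ w' : (prefixSuffixGraph k).Walk (del π) (del τ), w'.length ≤ w.length := by
  induction w with
  | nil => exact ⟨.nil, le_rfl⟩
  | cons h w ih =>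
    obtain ⟨w', hw⟩ := ih
    rcases del_adj _ _ h with he | ha
    · rw [he]
      exact ⟨w', by simp; omega⟩
    · exact ⟨.cons ha w', by simp; omega⟩

theorem del_surj {k : ℕ} (σ : Equiv.Perm (Fin k)) : ∃ π : Equiv.Perm (Fin (k+1)), del π = σ := by
  let π : Equiv.Perm (Fin (k+1)) :=
    (finSuccEquivLast.trans (Equiv.optionCongr σ)).trans finSuccEquivLast.symm
  have hl : π (Fin.last k) = Fin.last k := by simp [π]
  have hl' : π.symm (Fin.last k) = Fin.last k := by rw [Equiv.symm_apply_eq, hl]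
  refine ⟨π, ?_⟩
  ext i
  simp [del, hl']
  simp [π]

/-- Reversal of the first `t` positions. -/
def revPerm (k t : ℕ) (ht : t ≤ k) : Equiv.Perm (Fin k) :=
  Function.Involutive.toPerm
    (fun i => if h : (i:ℕ) < t then ⟨t - 1 - (i:ℕ), by omega⟩ else i)
    (by
      intro i
      ext
      by_cases h : (i:ℕ) < t
      · have h2 : t - 1 - (i:ℕ) < t := by omega
        simp [h, h2]
        omega
      · simp [h])

theorem revPerm_val (k t : ℕ) (ht : t ≤ k) (i : Fin k) :
    ((revPerm k t ht i : Fin k) : ℕ) = if (i:ℕ) < t then t - 1 - (i:ℕ) else i := by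
  change (((if h : (i:ℕ) < t then ⟨t - 1 - (i:ℕ), by omega⟩ else i) : Fin k) : ℕ) = _
  split <;> rfl

theorem reach_rev (k t : ℕ) (ht : t ≤ k) (τ : Equiv.Perm (Fin k)) :
    (prefixSuffixGraph k).Reachable τ (τ * revPerm k t ht) := by
  by_cases he : τ = τ * revPerm k t ht
  · rw [← he]
  apply SimpleGraph.Adj.reachable
  simp only [prefixSuffixGraph, SimpleGraph.fromRel_adj]
  refine ⟨he, Or.inr (Or.inl ⟨t, ht, ?_, ?_⟩)⟩
  · intro i hi
    rw [Equiv.Perm.mul_apply]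
    congr 1
    ext
    rw [revPerm_val, if_neg (by omega)]
  · intro i hi
    rw [Equiv.Perm.mul_apply]
    congr 1
    ext
    rw [revPerm_val, if_pos hi]

theorem swap_eq (n : ℕ) (i : Fin n) :
    Equiv.swap i.castSucc i.succ =
      revPerm (n+1) (i+2) (by omega) * revPerm (n+1) 2 (by have := i.isLt; omega) *
        revPerm (n+1) (i+2) (by omega) := by
  ext j
  simp only [Equiv.Perm.mul_apply, revPerm_val, Equiv.swap_apply_def, Fin.ext_iff,
    Fin.val_castSucc, Fin.val_succ]
  split_ifs <;> simp <;> omega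

theorem G_conn (n : ℕ) : (prefixSuffixGraph (n+1)).Connected := by
  have key : ∀ g : Equiv.Perm (Fin (n+1)), ∀ τ, (prefixSuffixGraph (n+1)).Reachable τ (τ * g) := by
    intro g
    have hg : g ∈ Submonoid.closure
        (Set.range fun i : Fin n => Equiv.swap i.castSucc i.succ) := by
      rw [Equiv.Perm.mclosure_swap_castSucc_succ]; trivial
    induction hg using Submonoid.closure_induction with
    | mem x hx =>
      obtain ⟨i, rfl⟩ := hx
      intro τ
      simp only [swap_eq, ← mul_assoc]
      exact ((reach_rev _ _ _ _).trans (reach_rev _ _ _ _)).trans (reach_rev _ _ _ _)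
    | one => intro τ; rw [mul_one]
    | mul x y _ _ hx hy =>
      intro τ
      rw [← mul_assoc]
      exact (hx τ).trans (hy _)
  exact ⟨fun a b => by simpa using key (a⁻¹ * b) a⟩

/-- For every integer `k ≥ 1`, `h(k) ≤ h(k + 1)`: the diameter of `G_k`
is at most the diameter of `G_{k+1}`. -/
theorem statement_2 (k : ℕ) (hk : 1 ≤ k) :
    (prefixSuffixGraph k).diam ≤ (prefixSuffixGraph (k + 1)).diam := by
  obtain ⟨a, b, hab⟩ := (prefixSuffixGraph k).exists_dist_eq_diam
  obtain ⟨π, rfl⟩ := del_surj a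
  obtain ⟨τ, rfl⟩ := del_surj b
  obtain ⟨w, hw⟩ := (G_conn k).exists_walk_length_eq_dist π τ
  obtain ⟨w', hw'⟩ := del_walk π τ w
  rw [← hab]
  calc _ ≤ w'.length := SimpleGraph.dist_le w'
    _ ≤ (prefixSuffixGraph (k+1)).dist π τ := by omega
    _ ≤ _ := SimpleGraph.dist_le_diam (SimpleGraph.connected_iff_ediam_ne_top.1 (G_conn k))
end

section
/- Let k ≥ 1 and σ ∈ S_k. If the equivalence relation ∼_σ has exactly one equivalence class on [k], then d_{G_k}(σ, Id_k) ≤ d_{P_k}(σ, Id_k) ≤ 4. -/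
/-- Reversal of the first `t` positions. -/
def flipFun (k t : ℕ) (ht : t ≤ k) (i : Fin k) : Fin k :=
  ⟨if (i : ℕ) < t then t - 1 - (i : ℕ) else i, by have := i.isLt; split <;> omega⟩

/-- Reversal of the first `t` positions, as a permutation. -/
def flipPerm (k t : ℕ) (ht : t ≤ k) : Equiv.Perm (Fin k) where
  toFun := flipFun k t ht
  invFun := flipFun k t ht
  left_inv := by
    intro i; apply Fin.ext; simp only [flipFun]; split_ifs <;> omega
  right_inv := by
    intro i; apply Fin.ext; simp only [flipFun]; split_ifs <;> omega

theorem flipPerm_val (k t : ℕ) (ht : t ≤ k) (i : Fin k) :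
    ((flipPerm k t ht i : Fin k) : ℕ) = if (i : ℕ) < t then t - 1 - (i : ℕ) else i := rfl

theorem flip_walk (k t : ℕ) (ht : t ≤ k) (τ : Equiv.Perm (Fin k)) :
    ∃ p : (pancakeGraph k).Walk τ (τ * flipPerm k t ht), p.length ≤ 1 := by
  have hr : PrefixRev k (τ * flipPerm k t ht) τ := by
    refine ⟨t, ht, ?_, ?_⟩
    · intro i hi
      rw [Equiv.Perm.mul_apply]
      congr 1
      apply Fin.ext
      rw [flipPerm_val, if_neg (by omega)]
    · intro i hi
      rw [Equiv.Perm.mul_apply]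
      congr 1
      apply Fin.ext
      rw [flipPerm_val, if_pos hi]
  by_cases h : τ = τ * flipPerm k t ht
  · rw [← h]
    exact ⟨SimpleGraph.Walk.nil, by simp⟩
  · have hadj : (pancakeGraph k).Adj τ (τ * flipPerm k t ht) := by
      rw [pancakeGraph, SimpleGraph.fromRel_adj]
      exact ⟨h, Or.inr hr⟩
    exact ⟨hadj.toWalk, by simp⟩

theorem four_flips (k t₁ t₂ t₃ t₄ : ℕ) (h₁ : t₁ ≤ k) (h₂ : t₂ ≤ k) (h₃ : t₃ ≤ k) (h₄ : t₄ ≤ k)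
    (σ : Equiv.Perm (Fin k))
    (h : ∀ i, ((σ (flipPerm k t₁ h₁ (flipPerm k t₂ h₂ (flipPerm k t₃ h₃
      (flipPerm k t₄ h₄ i)))) : Fin k) : ℕ) = i) :
    ∃ p : (pancakeGraph k).Walk σ 1, p.length ≤ 4 := by
  obtain ⟨p₁, hp₁⟩ := flip_walk k t₁ h₁ σ
  obtain ⟨p₂, hp₂⟩ := flip_walk k t₂ h₂ (σ * flipPerm k t₁ h₁)
  obtain ⟨p₃, hp₃⟩ := flip_walk k t₃ h₃ (σ * flipPerm k t₁ h₁ * flipPerm k t₂ h₂)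
  have H₄ := flip_walk k t₄ h₄ (σ * flipPerm k t₁ h₁ * flipPerm k t₂ h₂ * flipPerm k t₃ h₃)
  have e : σ * flipPerm k t₁ h₁ * flipPerm k t₂ h₂ * flipPerm k t₃ h₃ * flipPerm k t₄ h₄ = 1 := by
    ext i
    simpa using h i
  rw [e] at H₄
  obtain ⟨p₄, hp₄⟩ := H₄
  refine ⟨((p₁.append p₂).append p₃).append p₄, ?_⟩
  simp only [SimpleGraph.Walk.length_append]
  omega

theorem adj_step (k : ℕ) (σ : Equiv.Perm (Fin k)) (hone : OneClass k σ) (i : ℕ) (h : i + 1 < k) :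
    ((σ ⟨i + 1, h⟩ : ℕ) = (σ ⟨i, by omega⟩ : ℕ) + 1 ∨
      (σ ⟨i, by omega⟩ : ℕ) = (σ ⟨i + 1, h⟩ : ℕ) + 1) ∨
    ((σ ⟨i, by omega⟩ : ℕ) = 0 ∧ (σ ⟨i + 1, h⟩ : ℕ) = k - 1) ∨
    ((σ ⟨i, by omega⟩ : ℕ) = k - 1 ∧ (σ ⟨i + 1, h⟩ : ℕ) = 0) := by
  obtain ⟨_, h2⟩ := hone (σ ⟨i, by omega⟩) (σ ⟨i + 1, h⟩) i (by simp) (by simp)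
  rcases h2 with h2 | h2
  · left; omega
  · right
    rwa [Set.pair_eq_pair_iff] at h2

theorem up_case (k a : ℕ) (σ : Equiv.Perm (Fin k)) (hone : OneClass k σ) (ha : a < k)
    (h0 : ∀ h : 0 < k, (σ ⟨0, h⟩ : ℕ) = a)
    (h1 : ∀ h : 1 < k, (σ ⟨1, h⟩ : ℕ) = if a + 1 < k then a + 1 else a + 1 - k) (i : ℕ) :
    (∀ h : i < k, (σ ⟨i, h⟩ : ℕ) = if a + i < k then a + i else a + i - k) ∧
    (∀ h : i + 1 < k, (σ ⟨i + 1, h⟩ : ℕ) = if a + (i + 1) < k then a + (i + 1)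
      else a + (i + 1) - k) := by
  induction i with
  | zero => exact ⟨fun h => by rw [h0 h]; simp [ha], fun h => h1 h⟩
  | succ n ih =>
    refine ⟨ih.2, fun h => ?_⟩
    have e0 := ih.1 (by omega)
    have e1 := ih.2 (by omega)
    have e2 := adj_step k σ hone (n + 1) h
    have hne : (σ ⟨n, by omega⟩ : ℕ) ≠ (σ ⟨n + 1 + 1, h⟩ : ℕ) := by
      intro hc
      have := σ.injective (Fin.ext hc)
      simp at this
      omega
    have hb := (σ ⟨n + 1 + 1, h⟩).isLt
    split_ifs at * <;> omega

theorem down_case (k a : ℕ) (σ : Equiv.Perm (Fin k)) (hone : OneClass k σ) (ha : a < k)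
    (h0 : ∀ h : 0 < k, (σ ⟨0, h⟩ : ℕ) = a)
    (h1 : ∀ h : 1 < k, (σ ⟨1, h⟩ : ℕ) = if 1 ≤ a then a - 1 else a + k - 1) (i : ℕ) :
    (∀ h : i < k, (σ ⟨i, h⟩ : ℕ) = if i ≤ a then a - i else a + k - i) ∧
    (∀ h : i + 1 < k, (σ ⟨i + 1, h⟩ : ℕ) = if i + 1 ≤ a then a - (i + 1)
      else a + k - (i + 1)) := by
  induction i with
  | zero => exact ⟨fun h => by rw [h0 h]; simp, fun h => h1 h⟩
  | succ n ih =>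
    refine ⟨ih.2, fun h => ?_⟩
    have e0 := ih.1 (by omega)
    have e1 := ih.2 (by omega)
    have e2 := adj_step k σ hone (n + 1) h
    have hne : (σ ⟨n, by omega⟩ : ℕ) ≠ (σ ⟨n + 1 + 1, h⟩ : ℕ) := by
      intro hc
      have := σ.injective (Fin.ext hc)
      simp at this
      omega
    have hb := (σ ⟨n + 1 + 1, h⟩).isLt
    split_ifs at * <;> omega

theorem short_walk (k : ℕ) (hk : 1 ≤ k) (σ : Equiv.Perm (Fin k)) (hone : OneClass k σ) :
    ∃ p : (pancakeGraph k).Walk σ 1, p.length ≤ 4 := by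
  obtain ⟨a, hae⟩ : ∃ a, a = (σ ⟨0, by omega⟩ : ℕ) := ⟨_, rfl⟩
  have ha : a < k := by rw [hae]; exact (σ _).isLt
  have h0 : ∀ h : 0 < k, (σ ⟨0, h⟩ : ℕ) = a := fun _ => hae.symm
  have key : (∀ h : 1 < k, (σ ⟨1, h⟩ : ℕ) = if a + 1 < k then a + 1 else a + 1 - k) ∨
      (∀ h : 1 < k, (σ ⟨1, h⟩ : ℕ) = if 1 ≤ a then a - 1 else a + k - 1) := by
    by_cases h : 1 < k
    · have e := adj_step k σ hone 0 h
      have e0 := h0 (by omega)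
      have hb := (σ ⟨1, h⟩).isLt
      simp only [zero_add] at e
      rw [e0] at e
      have : (σ ⟨1, h⟩ : ℕ) = (if a + 1 < k then a + 1 else a + 1 - k) ∨
        (σ ⟨1, h⟩ : ℕ) = (if 1 ≤ a then a - 1 else a + k - 1) := by
        split_ifs <;> omega
      rcases this with h' | h'
      · exact Or.inl fun _ => h'
      · exact Or.inr fun _ => h'
    · exact Or.inl fun h' => absurd h' h
  rcases key with h1 | h1
  · have hv : ∀ j : Fin k, (σ j : ℕ) = if a + j < k then a + (j : ℕ) else a + j - k :=
      fun j => (up_case k a σ hone ha h0 h1 j).1 j.isLt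
    refine four_flips k (k - a) k a 0 (by omega) le_rfl (by omega) (by omega) σ ?_
    intro i
    have hi := i.isLt
    simp only [hv, flipPerm_val]
    split_ifs <;> omega
  · have hv : ∀ j : Fin k, (σ j : ℕ) = if (j : ℕ) ≤ a then a - (j : ℕ) else a + k - j :=
      fun j => (down_case k a σ hone ha h0 h1 j).1 j.isLt
    refine four_flips k (a + 1) k (k - 1 - a) k (by omega) le_rfl (by omega) le_rfl σ ?_
    intro i
    have hi := i.isLt
    simp only [hv, flipPerm_val]
    split_ifs <;> omega

/-- If `∼_σ` has exactly one equivalence class on `[k]`, then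
`d_{G_k}(σ, Id_k) ≤ d_{P_k}(σ, Id_k) ≤ 4`. -/
theorem statement_3 (k : ℕ) (hk : 1 ≤ k) (σ : Equiv.Perm (Fin k))
    (hone : OneClass k σ) :
    (prefixSuffixGraph k).dist σ 1 ≤ (pancakeGraph k).dist σ 1 ∧
      (pancakeGraph k).dist σ 1 ≤ 4 := by
  obtain ⟨p, hp⟩ := short_walk k hk σ hone
  have hle : pancakeGraph k ≤ prefixSuffixGraph k := by
    intro x y hxy
    rw [pancakeGraph, SimpleGraph.fromRel_adj] at hxy
    rw [prefixSuffixGraph, SimpleGraph.fromRel_adj]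
    exact ⟨hxy.1, hxy.2.imp Or.inl Or.inl⟩
  refine ⟨?_, (SimpleGraph.dist_le p).trans hp⟩
  obtain ⟨q, hq⟩ := p.reachable.exists_walk_length_eq_dist
  rw [← hq, ← SimpleGraph.Walk.length_mapLe hle q]
  exact SimpleGraph.dist_le _
end

section
/- Let k = 2d with d ≥ 1. For every π ∈ S_k there exists τ ∈ S_k such that ∼_τ has exactly one equivalence class on [k] and d_{G_k}(π, τ) ≤ (3/2)·k − 2. -/
section Abs

variable {α : Type*} (φ p : α → α)

inductive Blk : α → α → List α → Prop
  | base (a : α) : Blk a (φ a) [a, φ a]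
  | cons (a w : α) (l : List α) : Blk (p (φ a)) w l → Blk a w (a :: φ a :: l)

inductive Reach : ℕ → List α → List α → Prop
  | refl (l : List α) : Reach 0 l l
  | pre (n : ℕ) (A B l : List α) : Reach n (A.reverse ++ B) l → Reach (n + 1) (A ++ B) l
  | suf (n : ℕ) (A B l : List α) : Reach n (A ++ B.reverse) l → Reach (n + 1) (A ++ B) l

variable {φ p}

theorem Reach.trans' {m n : ℕ} {a b c : List α} (h : Reach m a b) (h' : Reach n b c) :
    Reach (m + n) a c := by
  induction h with
  | refl l => simpa using h'
  | pre m A B l _ ih =>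
    have := Reach.pre _ A B c (ih h')
    rwa [show m + 1 + n = m + n + 1 by omega]
  | suf m A B l _ ih =>
    have := Reach.suf _ A B c (ih h')
    rwa [show m + 1 + n = m + n + 1 by omega]

theorem Reach.perm' {m : ℕ} {a b : List α} (h : Reach m a b) : a.Perm b := by
  induction h with
  | refl l => exact List.Perm.refl _
  | pre m A B l _ ih => exact ((List.reverse_perm A).symm.append_right B).trans ih
  | suf m A B l _ ih => exact ((List.reverse_perm B).symm.append_left A).trans ih

theorem Reach.pre1 (A B l m : List α) (h1 : l = A ++ B) (h2 : m = A.reverse ++ B) :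
    Reach 1 l m := by
  subst h1 h2; exact Reach.pre 0 _ _ _ (Reach.refl _)

theorem Reach.suf1 (A B l m : List α) (h1 : l = A ++ B) (h2 : m = A ++ B.reverse) :
    Reach 1 l m := by
  subst h1 h2; exact Reach.suf 0 _ _ _ (Reach.refl _)

theorem Blk.append' {x a w : α} {l₁ l₂ : List α} (h₁ : Blk φ p x a l₁)
    (h₂ : Blk φ p (p a) w l₂) : Blk φ p x w (l₁ ++ l₂) := by
  induction h₁ with
  | base a => exact Blk.cons _ _ _ h₂
  | cons a w' l _ ih => exact Blk.cons _ _ _ (ih h₂)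

theorem Blk.rev' (hφ : ∀ a, φ (φ a) = a) (hp : ∀ a, p (p a) = a)
    {x w : α} {l : List α} (h : Blk φ p x w l) : Blk φ p w x l.reverse := by
  induction h with
  | base a => simpa [hφ] using Blk.base (φ := φ) (p := p) (φ a)
  | cons a w l _ ih =>
    have h2 : Blk φ p (p (p (φ a))) a [φ a, a] := by
      rw [hp]; simpa [hφ] using Blk.base (φ := φ) (p := p) (φ a)
    simpa using ih.append' h2

theorem Blk.struct {x w : α} {l : List α} (hp : ∀ a, p (p a) = a) (h : Blk φ p x w l) :
    ∃ m, l = x :: (m ++ [w]) ∧ ∀ y ∈ m, p y ∈ m := by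
  induction h with
  | base a => exact ⟨[], by simp⟩
  | cons a w l _ ih =>
    obtain ⟨m, rfl, hm⟩ := ih
    refine ⟨φ a :: p (φ a) :: m, by simp, ?_⟩
    intro y hy
    simp only [List.mem_cons] at hy ⊢
    rcases hy with rfl | rfl | hy
    · simp
    · simp [hp]
    · exact Or.inr (Or.inr (hm y hy))

theorem Blk.closed (hφ : ∀ a, φ (φ a) = a) {x w : α} {l : List α} (h : Blk φ p x w l) :
    ∀ y ∈ l, φ y ∈ l := by
  induction h with
  | base a => simp [hφ]
  | cons a w l _ ih =>
    intro y hy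
    simp only [List.mem_cons] at hy ⊢
    rcases hy with rfl | rfl | hy
    · simp
    · simp [hφ]
    · exact Or.inr (Or.inr (ih y hy))

theorem Blk.two_le {x w : α} {l : List α} (h : Blk φ p x w l) : l.length ≠ 1 := by
  cases h <;> simp

theorem Blk.chain {x w : α} {l : List α} (h : Blk φ p x w l) :
    l.IsChain (fun a b => b = φ a ∨ b = p a) := by
  induction h with
  | base a => simp
  | cons a w l h ih =>
    cases h with
    | base => simpa using ih
    | cons _ _ l h => simpa using ih

def pc (q : List α) : ℕ := if q.length = 1 then 3 else 4

def cost (L : List (List α)) : ℕ := (L.map pc).sum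

def revL (L : List (List α)) : List (List α) := (L.map List.reverse).reverse

theorem revL_flatten (L : List (List α)) : (revL L).flatten = L.flatten.reverse := by
  simp [revL, List.reverse_flatten]

theorem cost_revL (L : List (List α)) : cost (revL L) = cost L := by
  have e : ∀ l : List α, pc l.reverse = pc l := fun l => by simp [pc]
  simp [revL, cost, List.sum_reverse, Function.comp_def, e]

theorem cost_append (L M : List (List α)) : cost (L ++ M) = cost L + cost M := by
  simp [cost]

theorem cost_cons (q : List α) (M : List (List α)) : cost (q :: M) = pc q + cost M := by
  simp [cost]

theorem Blk.cost {x w : α} {l : List α} (h : Blk φ p x w l) : pc l = 4 := by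
  simp [pc, h.two_le]

variable (φ p) in
def Gd (q : List α) : Prop := (∃ a, q = [a]) ∨ ∃ x w, Blk φ p x w q

theorem gd_revL (hφ : ∀ a, φ (φ a) = a) (hp : ∀ a, p (p a) = a) {L : List (List α)}
    (h : ∀ q ∈ L, Gd φ p q) : ∀ q ∈ revL L, Gd φ p q := by
  intro q hq
  simp only [revL, List.mem_reverse, List.mem_map] at hq
  obtain ⟨r, hr, rfl⟩ := hq
  rcases h r hr with ⟨a, rfl⟩ | ⟨x, w, hb⟩
  · exact Or.inl ⟨a, by simp⟩
  · exact Or.inr ⟨_, _, hb.rev' hφ hp⟩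

theorem split_mem {L : List (List α)} {x : α} (h : x ∈ L.flatten) :
    ∃ A q B, L = A ++ q :: B ∧ x ∈ q := by
  obtain ⟨q, hq, hx⟩ := List.mem_flatten.1 h
  obtain ⟨A, B, rfl⟩ := List.append_of_mem hq
  exact ⟨A, q, B, rfl, hx⟩

/-- One step of the algorithm, or termination. -/
theorem step (hφ : ∀ a, φ (φ a) = a) (hp : ∀ a, p (p a) = a) (hφ' : ∀ a, φ a ≠ a)
    (hp' : ∀ a, p a ≠ a)
    (htr : ∀ s : List α, s ≠ [] → (∀ y ∈ s, φ y ∈ s) → (∀ y ∈ s, p y ∈ s) → ∀ y, y ∈ s)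
    (L : List (List α)) (hL : L ≠ []) (hg : ∀ q ∈ L, Gd φ p q) (hn : L.flatten.Nodup)
    (hall : ∀ x, x ∈ L.flatten) :
    (∃ x w, Blk φ p x w L.flatten ∧ 4 ≤ cost L) ∨
    ∃ m L', 1 ≤ m ∧ Reach m L.flatten L'.flatten ∧ (∀ q ∈ L', Gd φ p q) ∧
      cost L' + 2 * m ≤ cost L ∧ L' ≠ [] := by
  obtain ⟨b, T, rfl⟩ := List.exists_cons_of_ne_nil hL
  have hgT : ∀ q ∈ T, Gd φ p q := fun q hq => hg q (List.mem_cons_of_mem _ hq)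
  rcases hg b (by simp) with ⟨a, rfl⟩ | ⟨x, w, hb⟩
  · right
    have h1 : φ a ∈ T.flatten := by
      have := hall (φ a)
      simpa [hφ' a] using this
    obtain ⟨A, q, B, rfl, hq⟩ := split_mem h1
    rcases hgT q (by simp) with ⟨c, rfl⟩ | ⟨x, w, hb⟩
    · obtain rfl : φ a = c := by simpa using hq
      refine ⟨1, revL A ++ [a, φ a] :: B, le_refl _, ?_, ?_, ?_, by simp⟩
      · apply Reach.pre1 (a :: A.flatten) (φ a :: B.flatten)
        · simp
        · simp [revL_flatten]
      · intro q hq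
        simp only [List.mem_append, List.mem_cons] at hq
        rcases hq with hq | rfl | hq
        · exact gd_revL hφ hp (fun q hq => hgT q (by simp [hq])) q hq
        · exact Or.inr ⟨_, _, Blk.base a⟩
        · exact hgT q (by simp [hq])
      · simp only [cost_append, cost_cons, cost_revL, pc, List.length_cons, List.length_nil]
        norm_num; omega
    · exfalso
      have := hb.closed hφ _ hq
      rw [hφ] at this
      simp [this] at hn
  · by_cases hxb : p x ∈ b
    · left
      have hT : T.flatten = [] := by
        obtain ⟨m, hm, hmc⟩ := hb.struct hp
        have hcl : ∀ y ∈ b, p y ∈ b := by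
          have hnb : b.Nodup := by
            simp only [List.flatten_cons] at hn
            exact hn.of_append_left
          subst hm
          have hw : p x = w := by
            simp only [List.mem_cons, List.mem_append, List.not_mem_nil, or_false] at hxb
            rcases hxb with h | h | h
            · exact absurd h (hp' x)
            · have := hmc _ h
              rw [hp] at this
              simp [this] at hnb
            · exact h
          intro y hy
          simp only [List.mem_cons, List.mem_append, List.not_mem_nil, or_false] at hy ⊢
          rcases hy with rfl | h | rfl
          · simp [hw]
          · simp [hmc _ h]
          · left; rw [← hw, hp]
        have := htr b (by rw [hm]; simp) (hb.closed hφ) hcl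
        rw [List.eq_nil_iff_forall_not_mem]
        intro y hy
        simp only [List.flatten_cons] at hn
        exact (List.disjoint_of_nodup_append hn) (this y) hy
      refine ⟨x, w, by simpa [hT] using hb, ?_⟩
      rw [cost_cons, hb.cost]; omega
    · right
      have h1 : p x ∈ T.flatten := by
        have := hall (p x)
        simpa [hxb] using this
      obtain ⟨A, q, B, rfl, hq⟩ := split_mem h1
      have hbm : x ∈ b := by
        obtain ⟨m, rfl, _⟩ := hb.struct hp
        simp
      have hrb := hb.rev' hφ hp
      rcases hgT q (by simp) with ⟨c, rfl⟩ | ⟨y, v, hqb⟩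
      · obtain rfl : p x = c := by simpa using hq
        have hub : φ (p x) ∉ b := by
          intro h
          have := hb.closed hφ _ h
          rw [hφ] at this
          exact hxb this
        have h2 : φ (p x) ∈ (A ++ B).flatten := by
          have := hall (φ (p x))
          simpa [hub, hφ'] using this
        obtain ⟨A', q, B', hAB, hq'⟩ := split_mem h2
        have hgAB : ∀ q ∈ A ++ B, Gd φ p q := by
          intro q hq
          apply hgT
          simp only [List.mem_append, List.mem_cons] at hq ⊢
          tauto
        have hcost : cost (A ++ B) = cost A' + pc q + cost B' := by
          rw [hAB, cost_append, cost_cons]; omega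
        rw [hAB] at hgAB
        have hqq : q = [φ (p x)] := by
          rcases hgAB q (by simp) with ⟨c, rfl⟩ | ⟨y, v, hqb⟩
          · rw [List.mem_singleton.1 hq']
          · exfalso
            have := hqb.closed hφ _ hq'
            rw [hφ] at this
            have h3 : p x ∈ (A ++ B).flatten := by
              rw [hAB]; simp [this]
            simp only [List.flatten_cons, List.flatten_append] at hn h3
            have h4 := hn.of_append_right
            have : (p x :: (A.flatten ++ B.flatten)).Nodup :=
              (List.perm_middle.nodup_iff).1 (by simpa using h4)
            exact (List.nodup_cons.1 this).1 h3
        subst hqq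
        refine ⟨3, revL A' ++ (b.reverse ++ [p x, φ (p x)]) :: B', by norm_num, ?_, ?_, ?_,
          by simp⟩
        · have r1 : Reach 1 ((b :: (A ++ [p x] :: B)).flatten)
              (A.flatten.reverse ++ b.reverse ++ p x :: B.flatten) :=
            Reach.pre1 (b ++ A.flatten) (p x :: B.flatten) _ _ (by simp) (by simp)
          have r2 : Reach 1 (A.flatten.reverse ++ b.reverse ++ p x :: B.flatten)
              (p x :: (b ++ (A ++ B).flatten)) :=
            Reach.pre1 (A.flatten.reverse ++ b.reverse ++ [p x]) (B.flatten) _ _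
              (by simp) (by simp)
          have r3 : Reach 1 (p x :: (b ++ (A ++ B).flatten))
              (revL A' ++ (b.reverse ++ [p x, φ (p x)]) :: B').flatten := by
            rw [hAB]
            exact Reach.pre1 (p x :: (b ++ A'.flatten)) (φ (p x) :: B'.flatten) _ _
              (by simp) (by simp [revL_flatten])
          exact (r1.trans' r2).trans' r3
        · intro q hq
          simp only [List.mem_append, List.mem_cons (b := b.reverse ++ [p x, φ (p x)])] at hq
          rcases hq with hq | rfl | hq
          · exact gd_revL hφ hp (fun q hq => hgAB q (by simp [hq])) q hq
          · exact Or.inr ⟨_, _, hrb.append' (Blk.base (p x))⟩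
          · exact hgAB q (by simp [hq])
        · have hc := (hrb.append' (Blk.base (p x))).cost
          have e1 : pc [p x] = 3 := rfl
          have e2 : pc [φ (p x)] = 3 := rfl
          rw [cost_append] at hcost
          simp only [cost_append, cost_cons, cost_revL, hc, hb.cost, e1]
          omega
      · have hxq : x ∉ q := by
          intro h
          simp only [List.flatten_cons, List.flatten_append] at hn
          exact (List.disjoint_of_nodup_append hn) hbm (by simp [h])
        have hgA : ∀ q ∈ A, Gd φ p q := fun q hq => hgT q (by simp [hq])
        have hgB : ∀ q ∈ B, Gd φ p q := fun q hq => hgT q (by simp [hq])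
        have hend : p x = y ∨ p x = v := by
          obtain ⟨m, rfl, hm⟩ := hqb.struct hp
          simp only [List.mem_cons, List.mem_append, List.not_mem_nil, or_false] at hq
          rcases hq with h | h | h
          · exact Or.inl h
          · have := hm _ h
            rw [hp] at this
            simp [this] at hxq
          · exact Or.inr h
        rcases hend with rfl | rfl
        · have hnew := hrb.append' hqb
          refine ⟨1, revL A ++ (b.reverse ++ q) :: B, by norm_num, ?_, ?_, ?_, by simp⟩
          · exact Reach.pre1 (b ++ A.flatten) (q ++ B.flatten) _ _ (by simp)
              (by simp [revL_flatten])
          · intro r hr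
            simp only [List.mem_append, List.mem_cons] at hr
            rcases hr with hr | rfl | hr
            · exact gd_revL hφ hp hgA r hr
            · exact Or.inr ⟨_, _, hnew⟩
            · exact hgB r hr
          · simp only [cost_append, cost_cons, cost_revL, hnew.cost, hb.cost, hqb.cost]
            omega
        · have hnew := hrb.append' (hqb.rev' hφ hp)
          refine ⟨2, B ++ revL A ++ [b.reverse ++ q.reverse], by norm_num, ?_, ?_, ?_, by simp⟩
          · have r1 : Reach 1 ((b :: (A ++ q :: B)).flatten)
                (b ++ A.flatten ++ B.flatten.reverse ++ q.reverse) :=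
              Reach.suf1 (b ++ A.flatten) (q ++ B.flatten) _ _ (by simp) (by simp)
            have r2 : Reach 1 (b ++ A.flatten ++ B.flatten.reverse ++ q.reverse)
                (B ++ revL A ++ [b.reverse ++ q.reverse]).flatten :=
              Reach.pre1 (b ++ A.flatten ++ B.flatten.reverse) q.reverse _ _ (by simp)
                (by simp [revL_flatten])
            exact r1.trans' r2
          · intro r hr
            simp only [List.mem_append, List.mem_singleton] at hr
            rcases hr with (hr | hr) | rfl
            · exact hgB r hr
            · exact gd_revL hφ hp hgA r hr
            · exact Or.inr ⟨_, _, hnew⟩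
          · have e0 : cost ([] : List (List α)) = 0 := rfl
            simp only [cost_append, cost_cons, cost_revL, hnew.cost, hb.cost, hqb.cost, e0]
            omega

theorem mainAbs (hφ : ∀ a, φ (φ a) = a) (hp : ∀ a, p (p a) = a) (hφ' : ∀ a, φ a ≠ a)
    (hp' : ∀ a, p a ≠ a)
    (htr : ∀ s : List α, s ≠ [] → (∀ y ∈ s, φ y ∈ s) → (∀ y ∈ s, p y ∈ s) → ∀ y, y ∈ s)
    (N : ℕ) : ∀ (L : List (List α)), cost L ≤ N → L ≠ [] → (∀ q ∈ L, Gd φ p q) →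
    L.flatten.Nodup → (∀ x, x ∈ L.flatten) →
    ∃ n l x w, Reach n L.flatten l ∧ Blk φ p x w l ∧ 2 * n + 4 ≤ cost L := by
  induction N with
  | zero =>
    intro L hc hL hg hn hall
    rcases step hφ hp hφ' hp' htr L hL hg hn hall with ⟨x, w, hb, h⟩ | ⟨m, L', hm, _, _, h, _⟩
    · omega
    · omega
  | succ N ih =>
    intro L hc hL hg hn hall
    rcases step hφ hp hφ' hp' htr L hL hg hn hall with ⟨x, w, hb, h⟩ | ⟨m, L', hm, hr, hg', h, h0⟩
    · exact ⟨0, _, x, w, Reach.refl _, hb, by omega⟩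
    · obtain ⟨n, l, x, w, hr', hb, hc'⟩ := ih L' (by omega) h0 hg' (hr.perm'.nodup_iff.1 hn)
        (fun x => hr.perm'.mem_iff.1 (hall x))
      exact ⟨m + n, l, x, w, hr.trans' hr', hb, by omega⟩

end Abs

theorem exists_perm {k : ℕ} (l : List (Fin k)) (hl : l.length = k) (hn : l.Nodup) :
    ∃ τ : Equiv.Perm (Fin k), List.ofFn τ = l := by
  have hinj : Function.Injective (fun i : Fin k => l[(i : ℕ)]'(by omega)) := by
    intro i j h
    exact Fin.ext ((hn.getElem_inj_iff).1 h)
  refine ⟨Equiv.ofBijective _ (Finite.injective_iff_bijective.1 hinj), ?_⟩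
  apply List.ext_getElem
  · simp [hl]
  · intro i h1 h2
    simp

theorem perm_getElem {k : ℕ} {π : Equiv.Perm (Fin k)} {l : List (Fin k)} (h : List.ofFn π = l)
    (i : Fin k) : π i = l[(i : ℕ)]'(by subst h; simp) := by
  subst h; simp

theorem walk_of_reach {k n : ℕ} {l l' : List (Fin k)} (h : Reach n l l') :
    ∀ π : Equiv.Perm (Fin k), List.ofFn π = l →
    ∃ τ : Equiv.Perm (Fin k), List.ofFn τ = l' ∧
      ∃ w : (prefixSuffixGraph k).Walk π τ, w.length ≤ n := by
  induction h with
  | refl l => exact fun π hπ => ⟨π, hπ, SimpleGraph.Walk.nil, by simp⟩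
  | pre n A B l _ ih =>
    intro π hπ
    have hlen : (A ++ B).length = k := by rw [← hπ]; simp
    have hnd : (A ++ B).Nodup := by rw [← hπ]; exact List.nodup_ofFn.2 π.injective
    obtain ⟨σ, hσ⟩ := exists_perm (A.reverse ++ B) (by simpa using hlen)
      (((List.reverse_perm A).append_right B).nodup_iff.2 hnd)
    obtain ⟨τ, hτ, w, hw⟩ := ih σ hσ
    have hk : A.length + B.length = k := by simpa using hlen
    have hrel : PrefixRev k π σ := by
      refine ⟨A.length, by omega, ?_, ?_⟩
      · intro i hi
        rw [perm_getElem hπ, perm_getElem hσ, List.getElem_append_right hi,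
          List.getElem_append_right (by simpa using hi)]
        simp
      · intro i hi
        rw [perm_getElem hπ, perm_getElem hσ, List.getElem_append_left hi,
          List.getElem_append_left (by simp; omega), List.getElem_reverse]
        congr 1
        simp only
        omega
    refine ⟨τ, hτ, ?_⟩
    by_cases he : π = σ
    · subst he; exact ⟨w, by omega⟩
    · have hadj : (prefixSuffixGraph k).Adj π σ :=
        (SimpleGraph.fromRel_adj _ _ _).2 ⟨he, Or.inl (Or.inl hrel)⟩
      exact ⟨SimpleGraph.Walk.cons hadj w, by simpa using hw⟩
  | suf n A B l _ ih =>
    intro π hπ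
    have hlen : (A ++ B).length = k := by rw [← hπ]; simp
    have hnd : (A ++ B).Nodup := by rw [← hπ]; exact List.nodup_ofFn.2 π.injective
    obtain ⟨σ, hσ⟩ := exists_perm (A ++ B.reverse) (by simpa using hlen)
      (((List.reverse_perm B).append_left A).nodup_iff.2 hnd)
    obtain ⟨τ, hτ, w, hw⟩ := ih σ hσ
    have hk : A.length + B.length = k := by simpa using hlen
    have hrel : SuffixRev k π σ := by
      refine ⟨A.length, ?_, ?_⟩
      · intro i hi
        rw [perm_getElem hπ, perm_getElem hσ, List.getElem_append_left hi,
          List.getElem_append_left hi]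
      · intro i hi
        have := i.isLt
        rw [perm_getElem hπ, perm_getElem hσ, List.getElem_append_right hi,
          List.getElem_append_right (by simp), List.getElem_reverse]
        congr 1
        simp only
        omega
    refine ⟨τ, hτ, ?_⟩
    by_cases he : π = σ
    · subst he; exact ⟨w, by omega⟩
    · have hadj : (prefixSuffixGraph k).Adj π σ :=
        (SimpleGraph.fromRel_adj _ _ _).2 ⟨he, Or.inl (Or.inr hrel)⟩
      exact ⟨SimpleGraph.Walk.cons hadj w, by simpa using hw⟩

theorem prevVal_val (d : ℕ) (j : Fin (2 * d)) :
    ((prevVal d j : Fin (2 * d)) : ℕ) =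
      if (j : ℕ) = 0 then 2 * d - 1 else if (j : ℕ) = 2 * d - 1 then 0
      else if (j : ℕ) % 2 = 0 then (j : ℕ) - 1 else (j : ℕ) + 1 := by
  have := j.isLt
  simp only [prevVal]
  by_cases h0 : (j : ℕ) = 0
  · simp only [h0]
    simp
  · by_cases h1 : (j : ℕ) = 2 * d - 1
    · rw [if_neg (by omega), if_neg h0, if_pos h1, h1, show 2 * d - 1 + 1 = 2 * d by omega]
      simp
    · rw [if_neg h0, if_neg h1]
      split
      · rw [show (j : ℕ) + 2 * d - 1 = ((j : ℕ) - 1) + 2 * d by omega, Nat.add_mod_right,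
          Nat.mod_eq_of_lt (by omega)]
      · rw [Nat.mod_eq_of_lt (by omega)]

theorem partner_val (d : ℕ) (j : Fin (2 * d)) :
    ((partner d j : Fin (2 * d)) : ℕ) =
      if (j : ℕ) % 2 = 0 then (j : ℕ) + 1 else (j : ℕ) - 1 := rfl

theorem trans_vals (d : ℕ) (s : List (Fin (2 * d))) (hs : s ≠ [])
    (h1 : ∀ y ∈ s, partner d y ∈ s) (h2 : ∀ y ∈ s, prevVal d y ∈ s) : ∀ y, y ∈ s := by
  have hup : ∀ n, ∀ y ∈ s, ∀ z : Fin (2 * d), (z : ℕ) = (y : ℕ) + n → z ∈ s := by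
    intro n
    induction n with
    | zero => intro y hy z hz; rwa [show z = y from Fin.ext (by omega)]
    | succ n ih =>
      intro y hy z hz
      have := z.isLt
      by_cases he : (y : ℕ) % 2 = 0
      · apply ih _ (h1 y hy)
        rw [partner_val, if_pos he]; omega
      · apply ih _ (h2 y hy)
        rw [prevVal_val]
        split_ifs <;> omega
  obtain ⟨x, hx⟩ := List.exists_mem_of_ne_nil s hs
  have hxl := x.isLt
  have hl : (⟨2 * d - 1, by omega⟩ : Fin (2 * d)) ∈ s :=
    hup (2 * d - 1 - x) x hx _ (by simp; omega)
  have h0 : (⟨0, by omega⟩ : Fin (2 * d)) ∈ s := by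
    have := h2 _ hl
    have e : prevVal d ⟨2 * d - 1, by omega⟩ = (⟨0, by omega⟩ : Fin (2 * d)) := by
      apply Fin.ext
      rw [prevVal_val]
      simp only
      split_ifs <;> omega
    rwa [e] at this
  intro y
  exact hup y _ h0 y (by simp)

theorem oneClass_of_blk {d : ℕ} {τ : Equiv.Perm (Fin (2 * d))} {l : List (Fin (2 * d))}
    (hτ : List.ofFn τ = l) {x w : Fin (2 * d)} (hb : Blk (partner d) (prevVal d) x w l) :
    OneClass (2 * d) τ := by
  intro a b i _ hi
  have ha := (τ.symm a).isLt
  have hb' := (τ.symm b).isLt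
  have hik : i + 1 < 2 * d := by omega
  refine ⟨hik, ?_⟩
  have hlen : l.length = 2 * d := by rw [← hτ]; simp
  have hc := List.isChain_iff_getElem.1 hb.chain i (by omega)
  rw [← perm_getElem hτ ⟨i, by omega⟩, ← perm_getElem hτ ⟨i + 1, hik⟩] at hc
  unfold PiAdjacency
  generalize τ ⟨i, by omega⟩ = u at *
  generalize τ ⟨i + 1, hik⟩ = v at *
  have hu := u.isLt
  rcases hc with rfl | rfl
  · left
    rw [partner_val]
    split_ifs <;> omega
  · rw [prevVal_val]
    split_ifs with c1 c2 c3
    · right; rw [c1]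
    · right; rw [c2]; exact Set.pair_comm _ _
    · left; omega
    · left; omega

/-- Let `k = 2d` with `d ≥ 1`. For every `π ∈ S_k` there exists
`τ ∈ S_k` such that `∼_τ` has exactly one equivalence class and
`d_{G_k}(π, τ) ≤ (3/2)k - 2`. -/
theorem statement_4 (d : ℕ) (hd : 1 ≤ d) (π : Equiv.Perm (Fin (2 * d))) :
    ∃ τ : Equiv.Perm (Fin (2 * d)), OneClass (2 * d) τ ∧
      (((prefixSuffixGraph (2 * d)).dist π τ : ℚ) ≤ 3 / 2 * ((2 * d : ℕ) : ℚ) - 2) := by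
  have hflat : ((List.ofFn π).map (fun a => [a])).flatten = List.ofFn π := by
    rw [← List.flatMap_def]; simp
  have hcost : ∀ l : List (Fin (2 * d)), cost (l.map (fun a => [a])) = 3 * l.length := by
    intro l
    induction l with
    | nil => rfl
    | cons a l ih =>
      have e1 : pc [a] = 3 := rfl
      rw [List.map_cons, cost_cons, ih, List.length_cons, e1]; omega
  obtain ⟨n, l, x, w, hr, hb, hn⟩ := mainAbs (φ := partner d) (p := prevVal d)
    (by
      intro a; apply Fin.ext; have := a.isLt
      rw [partner_val, partner_val]; split_ifs <;> omega)
    (by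
      intro a; apply Fin.ext; have := a.isLt
      have h1 := prevVal_val d a
      have h2 := prevVal_val d (prevVal d a)
      split_ifs at h1 <;> split_ifs at h2 <;> omega)
    (by
      intro a h; have h' := congrArg Fin.val h; have := a.isLt
      rw [partner_val] at h'; split_ifs at h' <;> omega)
    (by
      intro a h; have h' := congrArg Fin.val h; have := a.isLt
      rw [prevVal_val] at h'; split_ifs at h' <;> omega)
    (trans_vals d) _ ((List.ofFn π).map (fun a => [a])) le_rfl
    (by
      intro h
      have := congrArg List.length h
      simp at this
      omega)
    (by
      intro q hq
      obtain ⟨a, _, rfl⟩ := List.mem_map.1 hq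
      exact Or.inl ⟨a, rfl⟩)
    (by rw [hflat]; exact List.nodup_ofFn.2 π.injective)
    (by
      rw [hflat]; intro x
      rw [List.mem_ofFn]
      exact π.surjective x)
  rw [hflat] at hr
  obtain ⟨τ, hτ, wk, hwk⟩ := walk_of_reach hr π rfl
  refine ⟨τ, oneClass_of_blk hτ hb, ?_⟩
  rw [hcost, List.length_ofFn] at hn
  have h1 : (prefixSuffixGraph (2 * d)).dist π τ + 2 ≤ 3 * d := by
    have := SimpleGraph.dist_le wk
    omega
  have h2 : (((prefixSuffixGraph (2 * d)).dist π τ : ℚ) + 2 ≤ 3 * d) := by exact_mod_cast h1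
  push_cast
  linarith
end

section
/- Let k = 2d with d ≥ 1. For every π ∈ S_k, ν(π) = 2 if and only if the equivalence relation ∼_π has exactly one equivalence class on [k]. -/
/-- Let `k = 2d` with `d ≥ 1`. For every `π ∈ S_k`, `ν(π) = 2` iff
`∼_π` has exactly one equivalence class on `[k]`. -/
theorem statement_7 (d : ℕ) (hd : 1 ≤ d) (π : Equiv.Perm (Fin (2 * d))) :
    nu d π = 2 ↔ OneClass (2 * d) π := by
  classical
  have hmem : ∀ a b, b ∈ classOf d π a ↔ ApproxSim d π a b := by
    intro a b
    simp [classOf]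
  have hself : ∀ a, a ∈ classOf d π a := fun a => (hmem a a).2 (Or.inl rfl)
  constructor
  · intro h
    have h1 : 3 * numSingletons d π + 4 * numBlocks d π = 4 := by
      unfold nu at h
      have : (3 * numSingletons d π + 4 * numBlocks d π : ℚ) = 4 := by linarith
      exact_mod_cast this
    have hS : numSingletons d π = 0 := by omega
    have hB : numBlocks d π = 1 := by omega
    have hnf : ∀ j, ¬ IsFree d π j := by
      intro j hj
      have h0 := Finset.card_eq_zero.1 hS
      have : j ∈ (∅ : Finset (Fin (2 * d))) := by
        rw [← h0]
        simpa using hj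
      simp at this
    have hin : ∀ j, classOf d π j ∈
        (Finset.univ.image (classOf d π)).filter (fun C => 1 < C.card) := by
      intro j
      refine Finset.mem_filter.2 ⟨Finset.mem_image_of_mem _ (Finset.mem_univ j), ?_⟩
      have := hnf j
      unfold IsFree at this
      push Not at this
      obtain ⟨j', hj', hne⟩ := this
      exact Finset.one_lt_card.2 ⟨j', (hmem _ _).2 hj', j, hself j, hne⟩
    intro a b
    have hab : classOf d π a = classOf d π b :=
      Finset.card_le_one.1 (le_of_eq hB) _ (by convert hin a) _ (by convert hin b)
    have hb : b ∈ classOf d π a := hab ▸ hself b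
    rcases (hmem a b).1 hb with rfl | h
    · intro i h1 h2
      simp at h1 h2
      omega
    · exact h.1
  · intro h
    have hA : ∀ a b, ApproxSim d π a b := fun a b => Or.inr ⟨h _ _, h _ _, h _ _⟩
    have hU : ∀ a, classOf d π a = Finset.univ := by
      intro a
      ext b
      simp [hmem, hA]
    have hS : numSingletons d π = 0 := by
      unfold numSingletons
      refine Finset.card_eq_zero.2 (Finset.filter_eq_empty_iff.2 ?_)
      intro j _ hj
      have h1 := congrArg Fin.val (hj (partner d j) (hA _ _))
      simp only [partner] at h1
      split at h1 <;> omega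
    have hB : numBlocks d π = 1 := by
      unfold numBlocks
      refine Finset.card_eq_one.2 ⟨Finset.univ, ?_⟩
      ext C
      simp only [Finset.mem_filter, Finset.mem_image, Finset.mem_univ, true_and, hU,
        Finset.mem_singleton]
      constructor
      · rintro ⟨⟨_, h⟩, _⟩
        exact h.symm
      · rintro rfl
        refine ⟨⟨⟨0, by omega⟩, rfl⟩, ?_⟩
        simp
        omega
    simp [nu, hS, hB]
end
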